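/- arXiv:1001.0217 — 2 statements merged into one kernel-verified Lean document; each statement's English description precedes it below -/
import Mathlib

section
/- There exist δ₀(n) > 0 and C = C(n) > 0 such that the following holds: let K be a convex body in ℝ^n such that δ = min{d > 0 : (1 − d)Δ_n ⊂ K ⊂ Δ_n} satisfies 0 < δ < δ₀(n), and suppose all the centroids of facets of Δ_n belong to K. Then vol(K)·vol(K°) ≥ vol(Δ_n)·vol(Δ_n°) + Cδ. -/
/-!
Write `ℓ i x = ⟪v i, x⟫` for the coordinates on the simplex `Δ = Δₙ`; they sum to zero,
`Δ = {ℓ i ≥ -1/n}` and `Δ° = {ℓ i ≤ 1}`. The idea is to bound `vol K` and `vol K°` from below by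
the volumes of perturbed barycentric subdivisions of `Δ` and `Δ°`, and to see that the first-order
terms of the two bounds do not cancel.

**Tangency points.** For every nonempty proper index set `S`, `tangency` produces a point `x` of
`K` and a point `y` of `K°` within `O(δ)` of the centroids of the face of `Δ` indexed by `S` and of
its dual face, such that the inner product of `x` with the dual centroid plus that of `y` with the
centroid is at least two, its value for the simplex itself. If the centroid of the face lies in `K`, no displacement occurs.

**Volumes.** The chambers `ℓ (π 0) > ⋯ > ℓ (π n)` cut `Δ` and `Δ°` into simplices with apex the
origin and with the centroids of a flag of faces as the other vertices. The piecewise linear map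
`plMap`, linear on each chamber, which moves the centroids to the tangency points is injective for
small `δ`, so the images of the pieces are disjoint; they lie in `K` (in `K°`) by convexity. Its
Jacobian on a chamber is `1 + trace + o(δ)` (`det_estimate`). Moreover, if the body contains a
point at small height beyond the hyperplane spanned by one perturbed flag, then shrinking the piece
of that flag by one half towards the point gives additional volume beyond the hyperplane, in
proportion to the height. `volume_lower` records both contributions, up to an error `ε δ`.
Averaged over all permutations, the trace only sees the component of each displacement along its
own centroid (`sum_trace`), so the tangency inequality makes the total first-order change of
`vol K` plus that of `vol K°`, relative to the simplex, nonnegative (`trace_nonneg`).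

**Gain.** Minimality of `δ` forces some vertex `v i` to be at distance at least a multiple of `δ`
from `K` (`deep_vertex`). By the hypothesis on facet centroids the coordinates of the points of
`K°` are at least `-n` (`polar_ell_ge`), and a separation argument then shows that there is a facet
opposite to some `v j` with `j ≠ i` for which either the midpoint of the tangency point at `v i`
and the facet centroid `-v j / n` can be pushed outwards within `K` by a multiple of `δ`, or `K°`
has a point close to `-n v j`, a vertex of `Δ°`, beyond the facet dual to `v i` (`dichotomy`).
Taking a flag which starts with `{i}` and ends with the complement of `{j}`, this yields a point
beyond the hyperplane spanned by the flag (`exists_gain`), which contributes a definite multiple of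
`δ` to one of the volumes.
-/

open MeasureTheory Metric Set Pointwise RealInnerProductSpace

noncomputable section

abbrev Euc (n : ℕ) : Type := EuclideanSpace ℝ (Fin n)

/-- A convex body: a compact convex set with nonempty interior. -/
def IsConvexBody {n : ℕ} (K : Set (Euc n)) : Prop :=
  IsCompact K ∧ Convex ℝ K ∧ (interior K).Nonempty

/-- The polar body of `K` with center of polarity `z`. -/
def polarAt {n : ℕ} (K : Set (Euc n)) (z : Euc n) : Set (Euc n) :=
  {y | ∀ x ∈ K, ⟪y, x - z⟫ ≤ 1}

/-- `z` is the Santaló point of `K`: the interior point minimizing the volume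
of the polar body `K^z`. -/
def IsSantaloPoint {n : ℕ} (K : Set (Euc n)) (z : Euc n) : Prop :=
  z ∈ interior K ∧ ∀ w ∈ interior K, volume (polarAt K z) ≤ volume (polarAt K w)

/-- `v` lists the vertices of a regular simplex inscribed in the unit sphere:
unit vectors with pairwise inner products `−1/n`. -/
def IsRegularSimplex {n : ℕ} (v : Fin (n + 1) → Euc n) : Prop :=
  (∀ i, ‖v i‖ = 1) ∧ ∀ i j, i ≠ j → ⟪v i, v j⟫ = -(1 / (n : ℝ))

/-- The simplex with vertex set `v`. -/
def simplexHull {n : ℕ} (v : Fin (n + 1) → Euc n) : Set (Euc n) :=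
  convexHull ℝ (Set.range v)

/-- The face of the simplex spanned by the vertices indexed by `s`. -/
def faceOf {n : ℕ} (v : Fin (n + 1) → Euc n) (s : Finset (Fin (n + 1))) : Set (Euc n) :=
  convexHull ℝ (v '' ↑s)

/-- The centroid of the face spanned by the vertices indexed by `s`. -/
def centroidOf {n : ℕ} (v : Fin (n + 1) → Euc n) (s : Finset (Fin (n + 1))) : Euc n :=
  (s.card : ℝ)⁻¹ • ∑ i ∈ s, v i

/-- `F^⊥ = {y : ⟨x, y⟩ = 0 for all x ∈ F}`. -/
def perpOf {n : ℕ} (F : Set (Euc n)) : Set (Euc n) :=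
  {y | ∀ x ∈ F, ⟪x, y⟫ = 0}

/-- The dual face `F^* = {y ∈ Δₙ° : ⟨x, y⟩ = 1 for all x ∈ F}` of the face of the
simplex indexed by `s`. -/
def dualFace {n : ℕ} (v : Fin (n + 1) → Euc n) (s : Finset (Fin (n + 1))) : Set (Euc n) :=
  {y ∈ polarAt (simplexHull v) 0 | ∀ x ∈ faceOf v s, ⟪x, y⟫ = 1}

/-- The centroid `c_{F^*} = c_F / ‖c_F‖²` of the dual face. -/
def dualCentroid {n : ℕ} (v : Fin (n + 1) → Euc n) (s : Finset (Fin (n + 1))) : Euc n :=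
  (‖centroidOf v s‖ ^ 2)⁻¹ • centroidOf v s

/-- `x` is a tangency point of the family of affine subspaces `t'·c + F^⊥` with the
body `K`: the parameter `t` is maximal so that `t·c + F^⊥` meets `K`, and
`x ∈ (t·c + F^⊥) ∩ ∂K`. -/
def IsTangency {n : ℕ} (F : Set (Euc n)) (c : Euc n) (K : Set (Euc n))
    (t : ℝ) (x : Euc n) : Prop :=
  0 < t ∧ x ∈ frontier K ∧ x ∈ (t • c) +ᵥ perpOf F ∧
    ∀ t' : ℝ, (((t' • c) +ᵥ perpOf F) ∩ K).Nonempty → t' ≤ t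

/-! ### The regular simplex in barycentric terms -/

/-- The linear functional `x ↦ ⟨v i, x⟩`. -/
def ell {n : ℕ} (v : Fin (n + 1) → Euc n) (i : Fin (n + 1)) : Euc n →L[ℝ] ℝ :=
  innerSL ℝ (v i)

/-- The sum of the vertices indexed by `S`. -/
def vsum {n : ℕ} (v : Fin (n + 1) → Euc n) (S : Finset (Fin (n + 1))) : Euc n :=
  ∑ i ∈ S, v i

section basics

variable {n : ℕ} {v : Fin (n + 1) → Euc n}

lemma ell_apply (i : Fin (n + 1)) (x : Euc n) : ell v i x = ⟪v i, x⟫ := rfl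

lemma ell_self (hv : IsRegularSimplex v) (i : Fin (n + 1)) : ell v i (v i) = 1 := by
  rw [ell_apply, real_inner_self_eq_norm_sq, hv.1 i]; norm_num

lemma ell_ne (hv : IsRegularSimplex v) {i j : Fin (n + 1)} (h : i ≠ j) :
    ell v i (v j) = -(1 / (n : ℝ)) := by
  rw [ell_apply, hv.2 i j h]

lemma ell_vsum (hn : 0 < n) (hv : IsRegularSimplex v) (S : Finset (Fin (n + 1)))
    (i : Fin (n + 1)) :
    ell v i (vsum v S) =
      if i ∈ S then ((n : ℝ) + 1 - S.card) / n else -((S.card : ℝ) / n) := by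
  have hn' : (n : ℝ) ≠ 0 := by positivity
  have h : ∀ j, ell v i (v j) = -(1 / (n : ℝ)) + if i = j then 1 + 1 / (n : ℝ) else 0 := by
    intro j
    by_cases hij : i = j
    · subst hij; rw [ell_self hv]; simp
    · rw [ell_ne hv hij]; simp [hij]
  rw [vsum, map_sum, Finset.sum_congr rfl (fun j _ => h j), Finset.sum_add_distrib,
    Finset.sum_ite_eq]
  simp only [Finset.sum_const, nsmul_eq_mul]
  split_ifs <;> field_simp <;> ring

lemma vsum_univ (hn : 0 < n) (hv : IsRegularSimplex v) : ∑ i, v i = 0 := by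
  have hn' : (n : ℝ) ≠ 0 := by positivity
  have h : ∀ i, ⟪v i, ∑ j, v j⟫ = 0 := by
    intro i
    have := ell_vsum hn hv Finset.univ i
    simp only [vsum, ell_apply] at this
    rw [this]; simp
  have : ⟪∑ i, v i, ∑ j, v j⟫ = 0 := by
    rw [sum_inner]; exact Finset.sum_eq_zero fun i _ => h i
  exact inner_self_eq_zero.mp this

lemma sum_ell (hn : 0 < n) (hv : IsRegularSimplex v) (x : Euc n) : ∑ i, ell v i x = 0 := by
  simp only [ell_apply]
  rw [← sum_inner, vsum_univ hn hv, inner_zero_left]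

lemma linInd (hn : 0 < n) (hv : IsRegularSimplex v) :
    LinearIndependent ℝ (fun i : Fin n => v i.succ) := by
  have hn' : (n : ℝ) ≠ 0 := by positivity
  rw [Fintype.linearIndependent_iff]
  intro g hg
  -- pairing the relation with a vertex determines every coefficient from their sum
  have h1 : ∀ j : Fin n, g j * (1 + 1 / (n : ℝ)) - (∑ i, g i) / n = 0 := by
    intro j
    have h2 := congrArg (ell v j.succ) hg
    rw [map_sum, map_zero] at h2
    rw [← h2]
    have h3 : ∀ i : Fin n, ell v j.succ (g i • v i.succ) =
        -(g i / (n : ℝ)) + if j = i then g i * (1 + 1 / (n : ℝ)) else 0 := by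
      intro i
      rw [map_smul, smul_eq_mul]
      by_cases hij : j = i
      · subst hij; rw [ell_self hv]; simp; ring
      · rw [ell_ne hv (by simpa using hij)]; simp [hij]; ring
    rw [Finset.sum_congr rfl (fun i _ => h3 i), Finset.sum_add_distrib, Finset.sum_ite_eq]
    simp [Finset.sum_div]; ring
  have h4 : (∑ i, g i) * (1 / (n : ℝ)) = 0 := by
    have h5 : ∑ j : Fin n, (g j * (1 + 1 / (n : ℝ)) - (∑ i, g i) / n) = 0 :=
      Finset.sum_eq_zero fun j _ => h1 j
    rw [Finset.sum_sub_distrib, ← Finset.sum_mul] at h5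
    simp only [Finset.sum_const, Finset.card_univ, Fintype.card_fin, nsmul_eq_mul] at h5
    have : (n : ℝ) * ((∑ i, g i) / n) = ∑ i, g i := by field_simp
    rw [this] at h5
    linarith
  have h6 : ∑ i, g i = 0 := by
    rcases mul_eq_zero.mp h4 with h | h
    · exact h
    · exact absurd h (by positivity)
  intro j
  have h7 := h1 j
  rw [h6] at h7
  have h8 : (1 + 1 / (n : ℝ)) ≠ 0 := by positivity
  rw [zero_div, sub_zero] at h7
  exact (mul_eq_zero.mp h7).resolve_right h8

lemma ell_ext (hn : 0 < n) (hv : IsRegularSimplex v) {x y : Euc n}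
    (h : ∀ i, ell v i x = ell v i y) : x = y := by
  have : Nonempty (Fin n) := ⟨⟨0, hn⟩⟩
  have hspan := (linInd hn hv).span_eq_top_of_card_eq_finrank (by simp)
  rw [← sub_eq_zero]
  have h0 : ∀ z ∈ Submodule.span ℝ (Set.range fun i : Fin n => v i.succ), ⟪z, x - y⟫ = 0 := by
    intro z hz
    induction hz using Submodule.span_induction with
    | mem z hz =>
      obtain ⟨i, rfl⟩ := hz
      have := h i.succ
      simp only [ell_apply] at this
      simp [inner_sub_right, this]
    | zero => simp
    | add a b _ _ ha hb => rw [inner_add_left, ha, hb, add_zero]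
    | smul c a _ ha => rw [inner_smul_left, ha, mul_zero]
  exact inner_self_eq_zero.mp (h0 (x - y) (by rw [hspan]; trivial))

lemma ell_comb (hv : IsRegularSimplex v) (r : Fin (n + 1) → ℝ)
    (i : Fin (n + 1)) :
    ell v i (∑ j, r j • v j) = r i * (1 + 1 / (n : ℝ)) - (∑ j, r j) / n := by
  have h3 : ∀ j, ell v i (r j • v j) =
      -(r j / (n : ℝ)) + if i = j then r j * (1 + 1 / (n : ℝ)) else 0 := by
    intro j
    rw [map_smul, smul_eq_mul]
    by_cases hij : i = j
    · subst hij; rw [ell_self hv]; simp; ring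
    · rw [ell_ne hv hij]; simp [hij]; ring
  rw [map_sum, Finset.sum_congr rfl (fun i _ => h3 i), Finset.sum_add_distrib, Finset.sum_ite_eq]
  simp [Finset.sum_div]; ring

/-- The vertices of a regular simplex form a tight frame. -/
lemma recon (hn : 0 < n) (hv : IsRegularSimplex v) (x : Euc n) :
    ((n : ℝ) / (n + 1)) • ∑ i, ell v i x • v i = x := by
  have hn' : (n : ℝ) ≠ 0 := by positivity
  refine ell_ext hn hv fun i => ?_
  rw [map_smul, ell_comb hv, sum_ell hn hv, smul_eq_mul]
  field_simp; ring

lemma inner_eq_sum (hn : 0 < n) (hv : IsRegularSimplex v) (x y : Euc n) :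
    ⟪x, y⟫ = ((n : ℝ) / (n + 1)) * ∑ i, ell v i x * ell v i y := by
  conv_lhs => rw [← recon hn hv x]
  rw [inner_smul_left, sum_inner]
  congr 1
  refine Finset.sum_congr rfl fun i _ => ?_
  rw [inner_smul_left]; rfl

lemma abs_ell_le (hv : IsRegularSimplex v) (i : Fin (n + 1)) (x : Euc n) :
    |ell v i x| ≤ ‖x‖ := by
  have := abs_real_inner_le_norm (v i) x
  rwa [hv.1 i, one_mul] at this

lemma norm_le_of_ell (hn : 0 < n) (hv : IsRegularSimplex v) {x : Euc n} {r : ℝ}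
    (h : ∀ i, |ell v i x| ≤ r) : ‖x‖ ≤ n * r := by
  rw [← recon hn hv x, norm_smul]
  have h1 : ‖∑ i, ell v i x • v i‖ ≤ ∑ i : Fin (n + 1), r := by
    refine norm_sum_le_of_le _ fun i _ => ?_
    rw [norm_smul, hv.1 i, mul_one]; exact h i
  simp only [Finset.sum_const, Finset.card_univ, Fintype.card_fin, nsmul_eq_mul] at h1
  rw [Real.norm_of_nonneg (by positivity)]
  calc (n : ℝ) / (n + 1) * ‖∑ i, ell v i x • v i‖
      ≤ (n : ℝ) / (n + 1) * (((n + 1 : ℕ) : ℝ) * r) := by gcongr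
    _ = n * r := by push_cast; field_simp

/-- The point with barycentric coordinates `(1 + n ℓᵢ(x)) / (n + 1)` is `x`. -/
lemma bary (hn : 0 < n) (hv : IsRegularSimplex v) (x : Euc n) :
    ∑ i, ((1 + n * ell v i x) / ((n : ℝ) + 1)) • v i = x := by
  conv_rhs => rw [← recon hn hv x]
  have : ∀ i, ((1 + n * ell v i x) / ((n : ℝ) + 1)) • v i =
      (1 / ((n : ℝ) + 1)) • v i + ((n : ℝ) / (n + 1)) • (ell v i x • v i) := by
    intro i; rw [smul_smul, ← add_smul]; congr 1; ring
  rw [Finset.sum_congr rfl fun i _ => this i, Finset.sum_add_distrib, ← Finset.smul_sum,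
    ← Finset.smul_sum, vsum_univ hn hv, smul_zero, zero_add]

lemma bary_sum (hn : 0 < n) (hv : IsRegularSimplex v) (x : Euc n) :
    ∑ i, ((1 + n * ell v i x) / ((n : ℝ) + 1)) = 1 := by
  rw [← Finset.sum_div, Finset.sum_add_distrib, ← Finset.mul_sum, sum_ell hn hv]
  simp only [Finset.sum_const, Finset.card_univ, Fintype.card_fin, nsmul_eq_mul, mul_zero,
    add_zero, mul_one]
  push_cast
  exact div_self (by positivity)

lemma mem_simplexHull (hn : 0 < n) (hv : IsRegularSimplex v) (x : Euc n) :
    x ∈ simplexHull v ↔ ∀ i, -(1 / (n : ℝ)) ≤ ell v i x := by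
  have hn' : (0 : ℝ) < n := by positivity
  constructor
  · intro hx i
    have hsub : simplexHull v ⊆ {x | -(1 / (n : ℝ)) ≤ ell v i x} := by
      refine convexHull_min ?_ (convex_halfSpace_ge (ell v i).toLinearMap.isLinear _)
      rintro _ ⟨j, rfl⟩
      simp only [mem_ofPred_eq]
      by_cases hij : i = j
      · subst hij; rw [ell_self hv]
        have : 0 ≤ 1 / (n : ℝ) := by positivity
        linarith
      · rw [ell_ne hv hij]
    exact hsub hx
  · intro h
    rw [← bary hn hv x]
    refine (convex_convexHull ℝ _).sum_mem (fun i _ => ?_) (bary_sum hn hv x)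
      (fun i _ => subset_convexHull ℝ _ ⟨i, rfl⟩)
    have := h i
    have h2 : -1 ≤ n * ell v i x := by
      have := mul_le_mul_of_nonneg_left this hn'.le
      field_simp at this
      linarith
    apply div_nonneg <;> linarith

lemma vertex_mem (i : Fin (n + 1)) : v i ∈ simplexHull v := subset_convexHull ℝ _ ⟨i, rfl⟩

lemma mem_polar_simplex (y : Euc n) :
    y ∈ polarAt (simplexHull v) 0 ↔ ∀ i, ell v i y ≤ 1 := by
  constructor
  · intro hy i
    have := hy (v i) (vertex_mem i)
    rwa [sub_zero, real_inner_comm] at this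
  · intro h x hx
    have hsub : simplexHull v ⊆ {x | ⟪y, x⟫ ≤ 1} := by
      refine convexHull_min ?_
        (convex_halfSpace_le (innerSL ℝ y).toLinearMap.isLinear _)
      rintro _ ⟨j, rfl⟩
      have := h j
      rwa [ell_apply, real_inner_comm] at this
    rw [sub_zero]; exact hsub hx

end basics

/-! ### Bodies close to the simplex and the tangency points -/

/-- The standing assumptions on a body `K` squeezed between `(1 - δ)Δₙ` and `Δₙ`. -/
structure Squeezed {n : ℕ} (v : Fin (n + 1) → Euc n) (δ : ℝ) (K : Set (Euc n)) : Prop where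
  pos : 0 < δ
  le_half : δ ≤ 1 / 2
  compact : IsCompact K
  conv : Convex ℝ K
  sub : K ⊆ simplexHull v
  vert : ∀ i, (1 - δ) • v i ∈ K

section body

variable {n : ℕ} {v : Fin (n + 1) → Euc n} {δ : ℝ} {K : Set (Euc n)}

lemma mem_polar_iff (y : Euc n) : y ∈ polarAt K 0 ↔ ∀ x ∈ K, ⟪y, x⟫ ≤ 1 := by
  simp [polarAt]

lemma Squeezed.ell_ge (hn : 0 < n) (hv : IsRegularSimplex v) (hK : Squeezed v δ K)
    {x : Euc n} (hx : x ∈ K) (i : Fin (n + 1)) : -(1 / (n : ℝ)) ≤ ell v i x :=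
  (mem_simplexHull hn hv x).mp (hK.sub hx) i

lemma Squeezed.zero_mem (hn : 0 < n) (hv : IsRegularSimplex v) (hK : Squeezed v δ K) :
    (0 : Euc n) ∈ K := by
  have h : ∑ i : Fin (n + 1), (1 / ((n : ℝ) + 1)) • ((1 - δ) • v i) ∈ K := by
    refine hK.conv.sum_mem (fun i _ => by positivity) ?_ (fun i _ => hK.vert i)
    simp
    field_simp
  rwa [← Finset.smul_sum, ← Finset.smul_sum, vsum_univ hn hv, smul_zero, smul_zero] at h

lemma Squeezed.polar_ell_le (hK : Squeezed v δ K) {y : Euc n} (hy : y ∈ polarAt K 0)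
    (i : Fin (n + 1)) : ell v i y ≤ 1 + 2 * δ := by
  have h := (mem_polar_iff y).mp hy _ (hK.vert i)
  rw [inner_smul_right, real_inner_comm] at h
  rw [ell_apply]
  have h1 := hK.pos
  have h2 := hK.le_half
  have h3 : (1 - δ) * ⟪v i, y⟫ ≤ (1 - δ) * (1 + 2 * δ) := by nlinarith
  exact le_of_mul_le_mul_left h3 (by linarith)

lemma Squeezed.polar_sub (hK : Squeezed v δ K) :
    polarAt (simplexHull v) 0 ⊆ polarAt K 0 := fun _ hy x hx => hy x (hK.sub hx)

lemma inner_vsum (x : Euc n) (S : Finset (Fin (n + 1))) :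
    ⟪x, vsum v S⟫ = ∑ i ∈ S, ell v i x := by
  rw [vsum, inner_sum]
  exact Finset.sum_congr rfl fun i _ => real_inner_comm _ _

lemma sum_compl_ell (hn : 0 < n) (hv : IsRegularSimplex v) (x : Euc n)
    (S : Finset (Fin (n + 1))) : ∑ i ∈ Sᶜ, ell v i x = -∑ i ∈ S, ell v i x := by
  have := Finset.sum_add_sum_compl S (fun i => ell v i x)
  rw [sum_ell hn hv] at this
  linarith

lemma card_compl_real (S : Finset (Fin (n + 1))) : ((Sᶜ).card : ℝ) = n + 1 - S.card := by
  have h : S.card + (Sᶜ).card = n + 1 := by simp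
  have : (S.card : ℝ) + ((Sᶜ).card : ℝ) = n + 1 := by exact_mod_cast h
  linarith

/-- A separating functional: a point outside a compact convex set containing the origin is
cut off by an element of the polar. -/
lemma exists_polar_of_notMem (hc : IsCompact K) (hconv : Convex ℝ K) (h0 : (0 : Euc n) ∈ K)
    {p : Euc n} (hp : p ∉ K) : ∃ y ∈ polarAt K 0, 1 < ⟪y, p⟫ := by
  obtain ⟨f, u, hfu, hup⟩ := geometric_hahn_banach_closed_point hconv hc.isClosed hp
  have hu : 0 < u := by simpa using hfu 0 h0
  refine ⟨u⁻¹ • (InnerProductSpace.toDual ℝ (Euc n)).symm f, ?_, ?_⟩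
  · rw [mem_polar_iff]
    intro x hx
    rw [inner_smul_left, InnerProductSpace.toDual_symm_apply]
    have := (hfu x hx).le
    simp only [conj_trivial]
    rw [inv_mul_le_iff₀ hu]; linarith
  · rw [inner_smul_left, InnerProductSpace.toDual_symm_apply]
    simp only [conj_trivial]
    rw [lt_inv_mul_iff₀ hu]; linarith

set_option maxHeartbeats 1000000 in
/-- Dual tangency points at the face indexed by `S`: the point `x` of `K` with equal
coordinates on `S` is extremal, and the point `y` of the polar supports `K` there along
the centroid. -/
lemma tangency (hn : 0 < n) (hv : IsRegularSimplex v) (hK : Squeezed v δ K)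
    (S : Finset (Fin (n + 1))) (h1 : 1 ≤ S.card) (h2 : S.card ≤ n) :
    ∃ x ∈ K, ∃ y ∈ polarAt K 0,
      ‖x - (1 / (S.card : ℝ)) • vsum v S‖ ≤ (2 * n ^ 2) * δ ∧
      ‖y - ((n : ℝ) / (n + 1 - S.card)) • vsum v S‖ ≤ (2 * n ^ 2) * δ ∧
      2 ≤ ((n : ℝ) / (n + 1 - S.card)) * ⟪x, vsum v S⟫ + (1 / (S.card : ℝ)) * ⟪y, vsum v S⟫ ∧
      ((1 / (S.card : ℝ)) • vsum v S ∈ K →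
        x = (1 / (S.card : ℝ)) • vsum v S ∧ y = ((n : ℝ) / (n + 1 - S.card)) • vsum v S) := by
  set k : ℝ := (S.card : ℝ) with hk
  have hk1 : (1 : ℝ) ≤ k := by rw [hk]; exact_mod_cast h1
  have hk2 : k ≤ n := by rw [hk]; exact_mod_cast h2
  have hnr : (1 : ℝ) ≤ n := hk1.trans hk2
  have hn0 : (0 : ℝ) < n := by linarith
  have hd : 0 < (n : ℝ) + 1 - k := by linarith
  have hδ := hK.pos
  have hδ2 := hK.le_half
  have hV : ∀ i, ell v i (vsum v S) = if i ∈ S then ((n : ℝ) + 1 - k) / n else -(k / n) :=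
    fun i => ell_vsum hn hv S i
  have hcD : ((n : ℝ) / (n + 1 - k)) • vsum v S ∈ polarAt K 0 := by
    refine hK.polar_sub ((mem_polar_simplex _).mpr fun i => ?_)
    rw [map_smul, hV, smul_eq_mul]
    split_ifs
    · field_simp; exact le_refl _
    · have : 0 ≤ (n : ℝ) / (n + 1 - k) * (k / n) := by positivity
      linarith
  by_cases hc : (1 / k) • vsum v S ∈ K
  · refine ⟨_, hc, _, hcD, ?_, ?_, ?_, fun _ => ⟨rfl, rfl⟩⟩
    · simp; positivity
    · simp; positivity
    · have hVV : ⟪vsum v S, vsum v S⟫ = k * (((n : ℝ) + 1 - k) / n) := by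
        rw [inner_vsum, Finset.sum_congr rfl (fun i hi => (hV i).trans (if_pos hi))]
        simp [hk]
      rw [inner_smul_left, inner_smul_left, hVV]
      simp only [conj_trivial]
      field_simp; norm_num
  · obtain ⟨i₀, hi₀⟩ : S.Nonempty := Finset.card_pos.mp h1
    set s0 : ℝ := ((n : ℝ) + 1 - k) / (n * k) with hs0
    have hs0p : 0 < s0 := by positivity
    have hks0 : k * s0 ≤ 1 := by
      rw [hs0]; field_simp; linarith
    have hcell : ∀ i, ell v i ((1 / k) • vsum v S) = if i ∈ S then s0 else -(1 / (n : ℝ)) := by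
      intro i
      rw [map_smul, hV, smul_eq_mul]
      split_ifs
      · rw [hs0]; field_simp
      · field_simp
    -- the extremal point of `K` with equal coordinates on `S`
    have hAc : IsCompact (K ∩ {x | ∀ i ∈ S, ell v i x = ell v i₀ x}) := by
      refine hK.compact.inter_right ?_
      simp only [ofPred_forall]
      exact isClosed_iInter fun i => isClosed_iInter fun _ =>
        isClosed_eq (ell v i).continuous (ell v i₀).continuous
    have hmem : (1 - δ) • ((1 / k) • vsum v S) ∈ K := by
      have h : ∑ i ∈ S, (1 / k) • ((1 - δ) • v i) ∈ K := by
        refine hK.conv.sum_mem (fun i _ => by positivity) ?_ (fun i _ => hK.vert i)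
        rw [Finset.sum_const, nsmul_eq_mul, ← hk]; field_simp
      rw [← Finset.smul_sum, ← Finset.smul_sum, smul_comm] at h
      exact h
    have hAmem : (1 - δ) • ((1 / k) • vsum v S) ∈
        K ∩ {x | ∀ i ∈ S, ell v i x = ell v i₀ x} := by
      refine ⟨hmem, fun i hi => ?_⟩
      rw [map_smul, map_smul _ (1 - δ), hcell, hcell, if_pos hi, if_pos hi₀]
    obtain ⟨x, ⟨hxK, hxS⟩, hxmax⟩ := hAc.exists_isMaxOn ⟨_, hAmem⟩ (ell v i₀).continuous.continuousOn
    set s : ℝ := ell v i₀ x with hs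
    have hs1 : (1 - δ) * s0 ≤ s := by
      have := hxmax hAmem
      simp only [mem_ofPred_eq] at this
      rwa [map_smul, hcell, if_pos hi₀, smul_eq_mul] at this
    have hxsum : ∑ i ∈ S, ell v i x = k * s := by
      rw [Finset.sum_congr rfl hxS, Finset.sum_const, nsmul_eq_mul]
    have hoff : ∀ i ∈ Sᶜ, 0 ≤ ell v i x + 1 / n := fun i _ => by
      have := hK.ell_ge hn hv hxK i; linarith
    have hoffsum : ∑ i ∈ Sᶜ, (ell v i x + 1 / (n : ℝ)) = k * (s0 - s) := by
      rw [Finset.sum_add_distrib, sum_compl_ell hn hv, hxsum, Finset.sum_const, nsmul_eq_mul,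
        card_compl_real, ← hk, hs0]
      field_simp; ring
    have hss0 : 0 ≤ s0 - s := by
      have := Finset.sum_nonneg hoff
      rw [hoffsum] at this
      exact nonneg_of_mul_nonneg_right this (by linarith)
    have hxc : ∀ i, |ell v i (x - (1 / k) • vsum v S)| ≤ k * (s0 - s) := by
      intro i
      rw [map_sub, hcell]
      split_ifs with hi
      · rw [hxS i hi, abs_sub_comm, abs_of_nonneg hss0]
        nlinarith
      · have hi' : i ∈ Sᶜ := by simpa using hi
        rw [sub_neg_eq_add, abs_of_nonneg (hoff i hi'), ← hoffsum]
        exact Finset.single_le_sum hoff hi'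
    have hslt : s < s0 := by
      by_contra hcon
      have heq : s0 - s = 0 := le_antisymm (by linarith) hss0
      apply hc
      have : x = (1 / k) • vsum v S := by
        refine ell_ext hn hv fun i => ?_
        have := hxc i
        rw [heq, mul_zero, abs_nonpos_iff, map_sub, sub_eq_zero] at this
        exact this
      rwa [← this]
    have hspos : 0 < s := by
      have : 0 < (1 - δ) * s0 := by apply mul_pos <;> linarith
      linarith
    set t : ℝ := s / s0 with ht
    have hts : t * s0 = s := by rw [ht]; field_simp
    have ht1 : t < 1 := by rw [ht, div_lt_one hs0p]; exact hslt
    have ht0 : 0 < t := by positivity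
    set τ : ℝ := 1 / (2 - t) with hτ
    have hτt : t < τ := by
      rw [hτ, lt_div_iff₀ (by linarith)]; nlinarith [sq_pos_of_pos (sub_pos.mpr ht1)]
    have hτ0 : 0 < τ := ht0.trans hτt
    -- separate `K` from the affine subspace just beyond the extremal point
    set B : Set (Euc n) := {z | ∀ i ∈ S, ell v i z = τ * s0} with hB
    have hBc : IsClosed B := by
      simp only [hB, ofPred_forall]
      exact isClosed_iInter fun i => isClosed_iInter fun _ =>
        isClosed_eq (ell v i).continuous continuous_const
    have hBconv : Convex ℝ B := by
      intro a ha b hb p q _ _ hpq i hi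
      rw [map_add, map_smul, map_smul, ha i hi, hb i hi, smul_eq_mul, smul_eq_mul, ← add_mul,
        hpq, one_mul]
    have hdisj : Disjoint K B := by
      rw [Set.disjoint_left]
      intro z hzK hzB
      have hzA : z ∈ K ∩ {x | ∀ i ∈ S, ell v i x = ell v i₀ x} :=
        ⟨hzK, fun i hi => (hzB i hi).trans (hzB i₀ hi₀).symm⟩
      have := hxmax hzA
      simp only [mem_ofPred_eq] at this
      rw [hzB i₀ hi₀, ← hs, ← hts] at this
      nlinarith
    obtain ⟨f, a, b, hfa, hab, hfb⟩ :=
      geometric_hahn_banach_compact_closed hK.conv hK.compact hBconv hBc hdisj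
    obtain ⟨b0, hb0⟩ : ∃ b0 : Euc n, b0 = τ • ((1 / k) • vsum v S) := ⟨_, rfl⟩
    have hb0B : b0 ∈ B := fun i hi => by rw [hb0, map_smul, hcell, if_pos hi, smul_eq_mul]
    have hf0 : 0 < f b0 := by
      have h1 := hfa 0 (hK.zero_mem hn hv)
      have h2 := hfb b0 hb0B
      rw [map_zero] at h1
      linarith
    set y' := (InnerProductSpace.toDual ℝ (Euc n)).symm f with hy'
    have hfy : ∀ z, ⟪y', z⟫ = f z := fun z => InnerProductSpace.toDual_symm_apply
    obtain ⟨y, hy⟩ : ∃ y : Euc n, y = (f b0)⁻¹ • y' := ⟨_, rfl⟩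
    have hyin : ∀ z, ⟪y, z⟫ = (f b0)⁻¹ * f z := fun z => by
      rw [hy, inner_smul_left, hfy]; rfl
    have hyP : y ∈ polarAt K 0 := by
      rw [mem_polar_iff]
      intro z hz
      rw [hyin, inv_mul_le_iff₀ hf0]
      have h1 := hfa z hz
      have h2 := hfb b0 hb0B
      linarith
    have hyb : ⟪y, b0⟫ = 1 := by rw [hyin, inv_mul_cancel₀ hf0.ne']
    have hyV : (1 / k) * ⟪y, vsum v S⟫ = 2 - t := by
      rw [hb0, inner_smul_right, inner_smul_right, hτ] at hyb
      have : 0 < 2 - t := by linarith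
      field_simp at hyb ⊢
      linarith
    have hyeq : ∀ l ∉ S, ∀ m ∉ S, ell v l y = ell v m y := by
      intro l hl m hm
      have hz : f (v l - v m) = 0 := by
        by_contra hne
        set w := v l - v m with hw
        have hwS : ∀ i ∈ S, ell v i w = 0 := fun i hi => by
          rw [hw, map_sub, ell_ne hv (by rintro rfl; exact hl hi),
            ell_ne hv (by rintro rfl; exact hm hi), sub_self]
        have hline : b0 + ((b - f b0) / f w) • w ∈ B := fun i hi => by
          rw [map_add, map_smul, hwS i hi, smul_zero, add_zero, hb0B i hi]
        have := hfb _ hline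
        rw [map_add, map_smul, smul_eq_mul, div_mul_cancel₀ _ hne] at this
        linarith
      have h1 := hyin (v l - v m)
      rw [hz, mul_zero, inner_sub_right, sub_eq_zero, real_inner_comm, real_inner_comm (v m)] at h1
      exact h1
    have hysum : ∑ i ∈ S, ell v i y = k * (2 - t) := by
      rw [← inner_vsum, ← hyV]; field_simp
    have hyle : ∀ i, ell v i y ≤ 1 + 2 * δ := hK.polar_ell_le hyP
    have ht2 : 1 - t ≤ 2 * δ := by
      have : k * (2 - t) ≤ k * (1 + 2 * δ) := by
        rw [← hysum]
        calc _ ≤ ∑ i ∈ S, (1 + 2 * δ) := Finset.sum_le_sum fun i _ => hyle i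
          _ = _ := by rw [Finset.sum_const, nsmul_eq_mul, ← hk]
      have := le_of_mul_le_mul_left this (by linarith)
      linarith
    have hyc : ∀ i, |ell v i (y - ((n : ℝ) / (n + 1 - k)) • vsum v S)| ≤ 2 * n * δ := by
      intro i
      rw [map_sub, map_smul, hV, smul_eq_mul]
      split_ifs with hi
      · have e1 : (n : ℝ) / (n + 1 - k) * ((n + 1 - k) / n) = 1 := by field_simp
        rw [e1, abs_le]
        have h3 : ∑ j ∈ S, (1 + 2 * δ - ell v j y) ≤ k * (2 * δ) := by
          rw [Finset.sum_sub_distrib, hysum, Finset.sum_const, nsmul_eq_mul, ← hk]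
          nlinarith
        have h4 : 1 + 2 * δ - ell v i y ≤ ∑ j ∈ S, (1 + 2 * δ - ell v j y) :=
          Finset.single_le_sum (f := fun j => 1 + 2 * δ - ell v j y)
            (fun j _ => by have := hyle j; linarith) hi
        constructor
        · nlinarith
        · nlinarith [hyle i]
      · have hi' : i ∈ Sᶜ := by simpa using hi
        have h3 : ((n : ℝ) + 1 - k) * ell v i y = -(k * (2 - t)) := by
          rw [← hysum, ← sum_compl_ell hn hv, ← card_compl_real,
            Finset.sum_congr rfl (fun j hj => hyeq j (by simpa using hj) i hi)]
          simp
        have e1 : ell v i y - (n : ℝ) / (n + 1 - k) * -(k / n) =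
            -(k * (1 - t) / (n + 1 - k)) := by
          have : ell v i y = -(k * (2 - t)) / (n + 1 - k) := by
            rw [← h3]; field_simp
          rw [this]; field_simp; ring
        rw [e1, abs_neg, abs_of_nonneg (by apply div_nonneg <;> nlinarith)]
        rw [div_le_iff₀ hd]
        have h5 : k * (1 - t) ≤ n * (2 * δ) := mul_le_mul hk2 ht2 (by linarith) hn0.le
        have h6 : 2 * n * δ * 1 ≤ 2 * n * δ * (n + 1 - k) :=
          mul_le_mul_of_nonneg_left (by linarith) (by positivity)
        linarith
    refine ⟨x, hxK, y, hyP, ?_, ?_, ?_, fun h => absurd h hc⟩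
    · have h3 : ‖x - (1 / k) • vsum v S‖ ≤ n * δ := by
        refine norm_le_of_ell hn hv fun i => (hxc i).trans ?_
        have : k * (s0 - s) ≤ k * (δ * s0) := mul_le_mul_of_nonneg_left (by linarith) (by linarith)
        nlinarith
      refine h3.trans ?_
      apply mul_le_mul_of_nonneg_right _ hδ.le
      nlinarith
    · have h3 := norm_le_of_ell hn hv hyc
      calc _ ≤ _ := h3
        _ = _ := by ring
    · rw [hyV, inner_vsum, hxsum]
      have : (n : ℝ) / (n + 1 - k) * (k * s) = t := by
        rw [ht, hs0]; field_simp
      rw [this]; linarith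

end body

/-! ### The alternative at a deficient vertex -/

section dichotomy

variable {n : ℕ} {v : Fin (n + 1) → Euc n} {δ : ℝ} {K : Set (Euc n)}

lemma vsum_compl (hn : 0 < n) (hv : IsRegularSimplex v) (j : Fin (n + 1)) :
    vsum v ({j}ᶜ : Finset (Fin (n + 1))) = -v j := by
  have h := Finset.sum_add_sum_compl {j} v
  rw [vsum_univ hn hv, Finset.sum_singleton] at h
  exact (neg_eq_of_add_eq_zero_right h).symm

lemma card_compl_single (j : Fin (n + 1)) : ({j}ᶜ : Finset (Fin (n + 1))).card = n := by
  simp [Finset.card_compl]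

lemma centroid_facet (hn : 0 < n) (hv : IsRegularSimplex v) (j : Fin (n + 1)) :
    centroidOf v ({j}ᶜ : Finset (Fin (n + 1))) = -((1 / (n : ℝ)) • v j) := by
  rw [centroidOf, card_compl_single]
  have := vsum_compl hn hv j
  rw [vsum] at this
  rw [this, smul_neg, one_div]

/-- If the facet centroids lie in `K`, the polar lies in the dilate of `Δₙ°` by `-n`. -/
lemma polar_ell_ge (hn : 0 < n) {y : Euc n} (hy : y ∈ polarAt K 0)
    (hc : ∀ j, -((1 / (n : ℝ)) • v j) ∈ K) (j : Fin (n + 1)) : -(n : ℝ) ≤ ell v j y := by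
  have h := (mem_polar_iff y).mp hy _ (hc j)
  have hn' : (0 : ℝ) < n := by positivity
  rw [inner_neg_right, inner_smul_right, real_inner_comm] at h
  rw [ell_apply]
  field_simp at h
  linarith

/-- Some vertex of the simplex stays at a distance proportional to `δ` from `K`, measured in
the direction of that vertex. -/
lemma deep_vertex (hn : 0 < n) (hv : IsRegularSimplex v) (hK : Squeezed v δ K)
    (hleast : ¬ ((1 - δ / 2) • simplexHull v ⊆ K))
    (hc : ∀ j, -((1 / (n : ℝ)) • v j) ∈ K) :
    ∃ i, ∀ x ∈ K, ell v i x ≤ 1 - δ / (8 * n) := by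
  have hn' : (1 : ℝ) ≤ n := by exact_mod_cast hn
  have hδ := hK.pos
  have hδ2 := hK.le_half
  obtain ⟨i, hi⟩ : ∃ i, (1 - δ / 2) • v i ∉ K := by
    by_contra! hcon
    apply hleast
    rw [simplexHull, ← convexHull_smul]
    refine convexHull_min ?_ hK.conv
    rintro _ ⟨_, ⟨i, rfl⟩, rfl⟩
    exact hcon i
  obtain ⟨y, hy, hyi⟩ := exists_polar_of_notMem hK.compact hK.conv (hK.zero_mem hn hv) hi
  refine ⟨i, fun x hx => ?_⟩
  rw [inner_smul_right, real_inner_comm, ← ell_apply] at hyi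
  have hle := hK.polar_ell_le hy
  set d : ℝ := ell v i y - 1 with hd
  have hd1 : δ / 2 ≤ d := by nlinarith
  have hd2 : d ≤ 2 * δ := by have := hle i; linarith
  set θ : ℝ := d / (2 * n) with hθ
  have hθ1 : θ * (2 * n) = d := by rw [hθ]; field_simp
  have hθ0 : 0 < θ := by rw [hθ]; apply div_pos <;> linarith
  -- `(1 + θ) v i` is a convex combination of `y` and the vertices `-n v l` of `Δₙ°`
  set α : ℝ := 1 / (2 * n) with hα
  have hα1 : α * (2 * n) = 1 := by rw [hα]; field_simp
  have hα0 : 0 < α := by positivity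
  set ω : Fin (n + 1) → ℝ := fun m => (1 + θ) / n - α * (ell v i y - ell v m y) / (n + 1) with hω
  have hω0 : ∀ m, 0 ≤ ω m := by
    intro m
    have h1 := polar_ell_ge hn hy hc m
    have h2 : ell v i y - ell v m y ≤ 2 * (n + 1) := by linarith
    have h3 : α * (ell v i y - ell v m y) / (n + 1) ≤ 1 / n := by
      rw [div_le_iff₀ (by positivity)]
      calc α * (ell v i y - ell v m y) ≤ α * (2 * (n + 1)) :=
            mul_le_mul_of_nonneg_left h2 hα0.le
        _ = 1 / n * (n + 1) := by rw [hα]; field_simp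
    have h4 : 1 / (n : ℝ) ≤ (1 + θ) / n := by gcongr; linarith
    simp only [hω]; linarith
  have hωi : ω i = (1 + θ) / n := by simp [hω]
  have hωsum : ∑ m, ω m - ω i = 1 - α := by
    have h1 : ∑ m, ω m = (n + 1) * ((1 + θ) / n) - α * ell v i y := by
      have e : ∀ m, ω m = ((1 + θ) / n - α * ell v i y / (n + 1)) + α / (n + 1) * ell v m y := by
        intro m; simp only [hω]; ring
      rw [Finset.sum_congr rfl fun m _ => e m, Finset.sum_add_distrib, ← Finset.mul_sum,
        sum_ell hn hv]
      simp only [Finset.sum_const, Finset.card_univ, Fintype.card_fin, nsmul_eq_mul]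
      push_cast
      field_simp
      ring
    rw [h1, hωi]
    have : α * ell v i y = α + θ := by
      have : ell v i y = 1 + d := by linarith
      rw [this, hθ, hα]; ring
    rw [this]; field_simp; ring
  have hvec : (1 + θ) • v i = α • y + ∑ m ∈ Finset.univ.erase i, ω m • (-((n : ℝ) • v m)) := by
    refine ell_ext hn hv fun l => ?_
    rw [map_add, map_smul, map_smul, smul_eq_mul, smul_eq_mul]
    have e1 : ∑ m ∈ Finset.univ.erase i, ω m • (-((n : ℝ) • v m)) =
        -((n : ℝ) • (∑ m, ω m • v m - ω i • v i)) := by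
      rw [← Finset.sum_erase_eq_sub (Finset.mem_univ i), Finset.smul_sum, ← Finset.sum_neg_distrib]
      refine Finset.sum_congr rfl fun m _ => ?_
      rw [smul_neg, smul_comm]
    rw [e1, map_neg, map_smul, map_sub, map_smul, ell_comb hv, smul_eq_mul, smul_eq_mul]
    have hs : ∑ m, ω m = 1 - α + ω i := by linarith
    rw [hs, hωi]
    have hα2 : α * ell v i y = α + θ := by
      have : ell v i y = 1 + d := by linarith
      rw [this, hθ, hα]; ring
    by_cases hil : l = i
    · subst hil
      rw [ell_self hv, hα2, hωi]; field_simp; ring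
    · rw [ell_ne hv hil]
      have hωl : ω l = (1 + θ) / n - (α + θ - α * ell v l y) / (n + 1) := by
        simp only [hω]; rw [mul_sub, hα2]
      rw [hωl]; field_simp; ring
  have hxv : (1 + θ) * ell v i x ≤ 1 := by
    have h1 : ⟪(1 + θ) • v i, x⟫ = (1 + θ) * ell v i x := by
      rw [inner_smul_left]; rfl
    rw [← h1, hvec, inner_add_left, inner_smul_left, sum_inner]
    have h2 := (mem_polar_iff y).mp hy x hx
    have h3 : ∑ m ∈ Finset.univ.erase i, ⟪ω m • (-((n : ℝ) • v m)), x⟫ ≤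
        ∑ m ∈ Finset.univ.erase i, ω m := by
      refine Finset.sum_le_sum fun m _ => ?_
      rw [inner_smul_left, inner_neg_left, inner_smul_left]
      have h4 := hK.ell_ge hn hv hx m
      rw [ell_apply] at h4
      have h5 : -((n : ℝ) * ⟪v m, x⟫) ≤ 1 := by
        have := mul_le_mul_of_nonneg_left h4 (by linarith : (0 : ℝ) ≤ n)
        field_simp at this
        linarith
      calc _ ≤ ω m * 1 := mul_le_mul_of_nonneg_left h5 (hω0 m)
        _ = _ := mul_one _
    rw [Finset.sum_erase_eq_sub (f := ω) (Finset.mem_univ i), hωsum] at h3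
    have h6 : α * ⟪y, x⟫ ≤ α * 1 := mul_le_mul_of_nonneg_left h2 hα0.le
    simp only [conj_trivial]
    linarith
  have hθ2 : δ / (4 * n) ≤ θ := by
    rw [hθ]; rw [div_le_div_iff₀ (by positivity) (by positivity)]; nlinarith
  have hθ3 : θ ≤ 1 := by
    rw [hθ, div_le_one (by positivity)]; linarith
  have h7 : ell v i x ≤ 1 - θ / 2 := by
    by_contra! hcon
    have : (1 + θ) * (1 - θ / 2) < (1 + θ) * ell v i x :=
      mul_lt_mul_of_pos_left hcon (by linarith)
    nlinarith
  have h8 : δ / (8 * n) = δ / (4 * n) / 2 := by rw [div_div]; congr 1; ring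
  linarith

set_option maxHeartbeats 1000000 in
/-- Let `x ∈ K` be close to the vertex `v i` but at depth proportional to `δ`. For a suitable
facet centroid `c`, either a dilate of the midpoint of `x` and `c` lies in `K`, or the polar
has a point near the vertex dual to `c` that sticks out over the facet dual to `v i`. -/
lemma dichotomy (hn : 0 < n) (hv : IsRegularSimplex v) (hK : Squeezed v δ K)
    (hδs : δ ≤ 1 / (192 * (n : ℝ) ^ 4)) (hc : ∀ j, -((1 / (n : ℝ)) • v j) ∈ K)
    {i : Fin (n + 1)} {x : Euc n} (hx : x ∈ K) (hxi : ‖x - v i‖ ≤ 2 * n ^ 2 * δ)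
    (hdeep : ell v i x ≤ 1 - δ / (8 * n)) :
    ∃ j, j ≠ i ∧
      ((1 + δ / (64 * n)) • ((1 / 2 : ℝ) • (x + -((1 / (n : ℝ)) • v j))) ∈ K ∨
      ∃ y ∈ polarAt K 0, ‖y - -((n : ℝ) • v j)‖ ≤ 3 * n ^ 2 * δ ∧
        1 + δ / (16 * n) ≤ ell v i y) := by
  have hn' : (1 : ℝ) ≤ n := by exact_mod_cast hn
  have hn0 : (0 : ℝ) < n := by linarith
  have hδ := hK.pos
  have hδ2 := hK.le_half
  have hxl := hK.ell_ge hn hv hx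
  set g : ℝ := δ / (8 * n) with hg
  have hg0 : 0 < g := by positivity
  have hgn : g * (8 * n) = δ := by rw [hg]; field_simp
  have hgδ : g ≤ δ := by nlinarith
  obtain ⟨j, hji, hj⟩ : ∃ j, j ≠ i ∧ g ≤ 1 + n * ell v j x := by
    by_contra! hcon
    have h1 : ∑ j ∈ Finset.univ.erase i, (1 + n * ell v j x) ≤
        ∑ j ∈ Finset.univ.erase i, g :=
      Finset.sum_le_sum fun j hj => (hcon j (Finset.ne_of_mem_erase hj)).le
    have h2 : ∑ j ∈ Finset.univ.erase i, (1 + n * ell v j x) = n * (1 - ell v i x) := by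
      rw [Finset.sum_erase_eq_sub (Finset.mem_univ i), Finset.sum_add_distrib, ← Finset.mul_sum,
        sum_ell hn hv]
      simp; ring
    have h4 : ∃ j, j ≠ i := by
      have : Nontrivial (Fin (n + 1)) := Fin.nontrivial_iff_two_le.mpr (by omega)
      exact exists_ne i
    obtain ⟨j, hj⟩ := h4
    have h3 : ∑ j ∈ Finset.univ.erase i, (1 + n * ell v j x) <
        ∑ j ∈ Finset.univ.erase i, g :=
      Finset.sum_lt_sum_of_nonempty ⟨j, Finset.mem_erase.mpr ⟨hj, Finset.mem_univ _⟩⟩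
        fun j hj => (hcon j (Finset.ne_of_mem_erase hj))
    rw [h2, Finset.sum_const, Finset.card_erase_of_mem (Finset.mem_univ i), nsmul_eq_mul] at h3
    simp at h3
    have := lt_of_mul_lt_mul_left h3 hn0.le
    linarith
  refine ⟨j, hji, ?_⟩
  by_cases hmem : (1 + δ / (64 * n)) • ((1 / 2 : ℝ) • (x + -((1 / (n : ℝ)) • v j))) ∈ K
  · exact Or.inl hmem
  right
  obtain ⟨y, hy, hy1⟩ := exists_polar_of_notMem hK.compact hK.conv (hK.zero_mem hn hv) hmem
  have hyx := (mem_polar_iff y).mp hy x hx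
  have hyc := (mem_polar_iff y).mp hy _ (hc j)
  have hyl := hK.polar_ell_le hy
  have hyg := polar_ell_ge hn hy hc
  set c : ℝ := δ / (64 * n) with hcdef
  have hcg : c = g / 8 := by rw [hcdef, hg]; rw [div_div]; congr 1; ring
  have hc0 : 0 < c := by positivity
  rw [inner_smul_right, inner_smul_right, inner_add_right] at hy1
  set A : ℝ := ⟪y, x⟫ with hA
  have hBeq : ⟪y, -((1 / (n : ℝ)) • v j)⟫ = -(1 / n) * ell v j y := by
    rw [inner_neg_right, inner_smul_right, real_inner_comm, ell_apply]; ring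
  rw [hBeq] at hy1 hyc
  have hsum : 2 - 2 * c ≤ A + -(1 / n) * ell v j y := by nlinarith
  have hA1 : 1 - 2 * c ≤ A := by linarith
  have hj1 : ell v j y ≤ -n + 2 * n * c := by
    have h1 : 1 - 2 * c ≤ -(1 / n) * ell v j y := by linarith
    have := mul_le_mul_of_nonneg_left h1 hn0.le
    have e : (n : ℝ) * (-(1 / n) * ell v j y) = -ell v j y := by field_simp
    rw [e] at this; linarith
  have hnc : n * c = δ / 64 := by rw [hcdef]; field_simp
  -- the deviations of the coordinates of `y` from those of the dual vertex
  set D : Fin (n + 1) → ℝ := fun l => ell v l (y - -((n : ℝ) • v j)) with hD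
  have hDj : D j = ell v j y + n := by
    simp only [hD]; rw [map_sub, map_neg, map_smul, ell_self hv, smul_eq_mul]; ring
  have hDl : ∀ l, l ≠ j → D l = ell v l y - 1 := by
    intro l hl
    simp only [hD]; rw [map_sub, map_neg, map_smul, ell_ne hv hl, smul_eq_mul]; field_simp
  have hDle : ∀ l, D l ≤ 2 * δ := by
    intro l
    by_cases hl : l = j
    · subst hl; rw [hDj]; nlinarith
    · rw [hDl l hl]; linarith [hyl l]
  have hDsum : ∑ l, D l = 0 := by simp only [hD]; exact sum_ell hn hv _
  have hDge : ∀ l, -(3 * n * δ) ≤ D l := by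
    intro l
    have h1 : 2 * δ - D l ≤ ∑ m, (2 * δ - D m) :=
      Finset.single_le_sum (f := fun m => 2 * δ - D m)
        (fun m _ => by have := hDle m; linarith) (Finset.mem_univ l)
    rw [Finset.sum_sub_distrib, hDsum] at h1
    simp at h1
    nlinarith
  have hDabs : ∀ l, |D l| ≤ 3 * n * δ := fun l => by
    rw [abs_le]; exact ⟨hDge l, (hDle l).trans (by nlinarith)⟩
  refine ⟨y, hy, ?_, ?_⟩
  · have := norm_le_of_ell hn hv hDabs
    calc _ ≤ _ := this
      _ = _ := by ring
  · -- expand `⟨y, x⟩` in barycentric coordinates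
    set lam : Fin (n + 1) → ℝ := fun l => (1 + n * ell v l x) / ((n : ℝ) + 1) with hlam
    have hlam0 : ∀ l, 0 ≤ lam l := by
      intro l
      have := mul_le_mul_of_nonneg_left (hxl l) hn0.le
      have e : (n : ℝ) * -(1 / n) = -1 := by field_simp
      rw [e] at this
      simp only [hlam]
      apply div_nonneg <;> linarith
    have hlamsum : ∑ l, lam l = 1 := bary_sum hn hv x
    have hAx : A = 1 - (n + 1) * lam j + ∑ l, lam l * D l := by
      have e1 : A = ∑ l, lam l * ell v l y := by
        have : x = ∑ l, lam l • v l := (bary hn hv x).symm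
        rw [hA]
        conv_lhs => rw [this]
        rw [inner_sum]
        refine Finset.sum_congr rfl fun l _ => ?_
        rw [inner_smul_right, real_inner_comm]; rfl
      have e2 : ∀ l, lam l * ell v l y =
          lam l + lam l * D l - if l = j then (n + 1) * lam j else 0 := by
        intro l
        by_cases hl : l = j
        · subst hl; rw [hDj, if_pos rfl]; ring
        · rw [hDl l hl, if_neg hl]; ring
      rw [e1, Finset.sum_congr rfl fun l _ => e2 l, Finset.sum_sub_distrib,
        Finset.sum_add_distrib, hlamsum, Finset.sum_ite_eq']
      simp; ring
    have hlj : g ≤ (n + 1) * lam j := by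
      simp only [hlam]; rw [mul_div_cancel₀ _ (by positivity)]; exact hj
    have hli : 1 - lam i ≤ 2 * n ^ 2 * δ := by
      have h1 := (abs_ell_le hv i (x - v i)).trans hxi
      rw [map_sub, ell_self hv, abs_le] at h1
      have e : 1 - lam i = n / (n + 1) * (1 - ell v i x) := by
        simp only [hlam]; field_simp; ring
      have h2 : (n : ℝ) / (n + 1) ≤ 1 := by rw [div_le_one (by positivity)]; linarith
      have h3 : 0 ≤ 1 - ell v i x := by linarith
      rw [e]
      have h4 := mul_le_mul_of_nonneg_right h2 h3
      linarith
    have hrest : ∑ l ∈ Finset.univ.erase i, lam l * D l ≤ (1 - lam i) * (3 * n * δ) := by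
      rw [← hlamsum, ← Finset.sum_erase_eq_sub (Finset.mem_univ i), Finset.sum_mul]
      exact Finset.sum_le_sum fun l _ =>
        mul_le_mul_of_nonneg_left (le_of_abs_le (hDabs l)) (hlam0 l)
    rw [Finset.sum_erase_eq_sub (Finset.mem_univ i)] at hrest
    have hli1 : lam i ≤ 1 := by
      rw [← hlamsum]
      exact Finset.single_le_sum (f := lam) (fun l _ => hlam0 l) (Finset.mem_univ i)
    have hq : (1 - lam i) * (3 * n * δ) ≤ g / 4 := by
      have h1 : (1 - lam i) * (3 * n * δ) ≤ (2 * n ^ 2 * δ) * (3 * n * δ) :=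
        mul_le_mul_of_nonneg_right hli (by positivity)
      have h2 : δ * (192 * n ^ 4) ≤ 1 := by
        rwa [le_div_iff₀ (by positivity)] at hδs
      have h3 : (2 * n ^ 2 * δ) * (3 * n * δ) = g * (δ * (192 * n ^ 4)) / 4 := by
        rw [← hgn]; ring
      rw [h3] at h1
      have h4 := mul_le_mul_of_nonneg_left h2 hg0.le
      linarith
    have hfin : g / 2 ≤ lam i * D i := by linarith
    have hDi : D i = ell v i y - 1 := hDl i hji.symm
    have hDpos : 0 ≤ D i := by
      by_contra! hneg
      have := mul_nonpos_of_nonneg_of_nonpos (hlam0 i) hneg.le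
      linarith
    have : lam i * D i ≤ D i := mul_le_of_le_one_left hDpos hli1
    have e : δ / (16 * n) = g / 2 := by rw [hg, div_div]; congr 1; ring
    rw [e]; linarith

end dichotomy

/-! ### Chambers of the simplex and the piecewise linear map -/

section chambers

variable {n : ℕ} {v : Fin (n + 1) → Euc n}

/-- The `k`-th member `{π 0, …, π k}` of the flag of index sets determined by `π`. -/
def flag (π : Equiv.Perm (Fin (n + 1))) (k : Fin n) : Finset (Fin (n + 1)) :=
  (Finset.Iic k.castSucc).map π.toEmbedding

lemma mem_flag (π : Equiv.Perm (Fin (n + 1))) (k : Fin n) (m : Fin (n + 1)) :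
    π m ∈ flag π k ↔ m ≤ k.castSucc := by
  simp [flag]

lemma card_flag (π : Equiv.Perm (Fin (n + 1))) (k : Fin n) : (flag π k).card = k + 1 := by
  simp [flag]

lemma flag_injective (π : Equiv.Perm (Fin (n + 1))) : Function.Injective (flag π) := by
  intro k l h
  have := congrArg Finset.card h
  rw [card_flag, card_flag] at this
  exact Fin.ext (by omega)

lemma flag_zero {m : ℕ} (π : Equiv.Perm (Fin (m + 1 + 1))) : flag π 0 = {π 0} := by
  ext x
  obtain ⟨y, rfl⟩ := π.surjective x
  rw [mem_flag]
  simp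

lemma flag_last {m : ℕ} (π : Equiv.Perm (Fin (m + 1 + 1))) :
    flag π (Fin.last m) = {π (Fin.last _)}ᶜ := by
  ext x
  obtain ⟨y, rfl⟩ := π.surjective x
  rw [mem_flag]
  simp only [Finset.mem_compl, Finset.mem_singleton, EmbeddingLike.apply_eq_iff_eq]
  rw [Fin.le_def, Fin.ext_iff]
  have := y.2
  simp only [Fin.val_castSucc, Fin.val_last]
  omega

/-- The `k`-th wall functional `ℓ_{π k} - ℓ_{π (k+1)}` of the chamber of `π`. -/
def wall (v : Fin (n + 1) → Euc n) (π : Equiv.Perm (Fin (n + 1))) (k : Fin n) :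
    Euc n →L[ℝ] ℝ :=
  ell v (π k.castSucc) - ell v (π k.succ)

lemma wall_apply (π : Equiv.Perm (Fin (n + 1))) (k : Fin n) (x : Euc n) :
    wall v π k x = ell v (π k.castSucc) x - ell v (π k.succ) x := rfl

/-- The open chamber of `π`: the points whose coordinates `ℓ_{π 0} > ℓ_{π 1} > ⋯` decrease. -/
def chamber (v : Fin (n + 1) → Euc n) (π : Equiv.Perm (Fin (n + 1))) : Set (Euc n) :=
  {x | ∀ k, 0 < wall v π k x}

lemma chamber_anti {π : Equiv.Perm (Fin (n + 1))} {x : Euc n} (hx : x ∈ chamber v π) :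
    StrictAnti fun m => ell v (π m) x := by
  rw [Fin.strictAnti_iff_succ_lt]
  intro k
  have := hx k
  rw [wall_apply] at this
  linarith

lemma sum_abel {V : Type*} [AddCommGroup V] [Module ℝ V] (n : ℕ) (f : Fin (n + 1) → ℝ)
    (w : Fin (n + 1) → V) :
    ∑ k : Fin n, (f k.castSucc - f k.succ) • ∑ m ∈ Finset.Iic k.castSucc, w m =
      ∑ m, f m • w m - f (Fin.last n) • ∑ m, w m := by
  induction n with
  | zero => simp
  | succ n ih =>
    have key : ∀ k : Fin (n + 1), ∑ m ∈ Finset.Iic k.castSucc, w m =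
        ∑ m ∈ Finset.Iic k, w m.castSucc := by
      intro k
      rw [← Fin.map_castSuccEmb_Iic, Finset.sum_map]; rfl
    simp only [key]
    rw [Fin.sum_univ_castSucc]
    have ih' := ih (fun m => f m.castSucc) (fun m => w m.castSucc)
    simp only [← Fin.succ_castSucc] at ih' ⊢
    rw [ih', Fin.sum_univ_castSucc (fun m => f m • w m), Fin.sum_univ_castSucc w]
    have : Finset.Iic (Fin.last n) = Finset.univ := by ext; simp [Fin.le_last]
    rw [this]
    simp only [Fin.succ_last, sub_smul, smul_add]
    abel

/-- Abel summation: a point is the combination of the vectors of the flag of `π` with the wall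
functionals as coefficients. -/
lemma flag_expand (hn : 0 < n) (hv : IsRegularSimplex v) (π : Equiv.Perm (Fin (n + 1)))
    (x : Euc n) :
    ((n : ℝ) / (n + 1)) • ∑ k, wall v π k x • vsum v (flag π k) = x := by
  have h := sum_abel n (fun m => ell v (π m) x) (fun m => v (π m))
  have h1 : ∀ k : Fin n, ∑ m ∈ Finset.Iic k.castSucc, v (π m) = vsum v (flag π k) := by
    intro k; simp [vsum, flag, Finset.sum_map]
  have h2 : ∑ m, v (π m) = 0 := by rw [Equiv.sum_comp π v]; exact vsum_univ hn hv
  have h3 : ∑ m, ell v (π m) x • v (π m) = ∑ m, ell v m x • v m :=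
    Equiv.sum_comp π (fun m => ell v m x • v m)
  simp only [h1] at h
  rw [h2, h3, smul_zero, sub_zero] at h
  simp only [wall_apply]
  rw [h]
  exact recon hn hv x

lemma wall_flag (hn : 0 < n) (hv : IsRegularSimplex v) (π : Equiv.Perm (Fin (n + 1)))
    (k l : Fin n) :
    wall v π k (vsum v (flag π l)) = if k = l then ((n : ℝ) + 1) / n else 0 := by
  have hn' : (0 : ℝ) < n := by exact_mod_cast hn
  rw [wall_apply, ell_vsum hn hv, ell_vsum hn hv]
  simp only [mem_flag, card_flag]
  rcases lt_trichotomy k l with h | h | h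
  · rw [if_pos (by exact_mod_cast h.le), if_pos (by rw [Fin.le_def]; simpa using h), if_neg h.ne]
    ring
  · subst h
    rw [if_pos le_rfl, if_neg (by rw [Fin.le_def]; simp), if_pos rfl]
    field_simp; ring
  · rw [if_neg (by simpa using h), if_neg (by rw [Fin.le_def]; simp; have := h; omega),
      if_neg h.ne']
    ring

/-- The base point attached to `S` and the weight function `a`: the multiple of
`∑ i ∈ S, v i` at which the functional of weight `a` equals one. -/
def base (a : ℕ → ℝ) (v : Fin (n + 1) → Euc n) (S : Finset (Fin (n + 1))) : Euc n :=
  ((n : ℝ) / ((n + 1) * a S.card)) • vsum v S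

/-- The linear functional equal to one on all base points of the flag of `π`. -/
def level (a : ℕ → ℝ) (v : Fin (n + 1) → Euc n) (π : Equiv.Perm (Fin (n + 1))) :
    Euc n →L[ℝ] ℝ :=
  ∑ k : Fin n, a (k + 1) • wall v π k

/-- The linear perturbation which moves the base points `b_S` of the flag of `π` to
`b_S + ζ S`. -/
def pert (a : ℕ → ℝ) (v : Fin (n + 1) → Euc n) (ζ : Finset (Fin (n + 1)) → Euc n)
    (π : Equiv.Perm (Fin (n + 1))) : Euc n →L[ℝ] Euc n :=
  ∑ k : Fin n, (a (k + 1) • wall v π k).smulRight (ζ (flag π k))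

lemma level_apply (a : ℕ → ℝ) (π : Equiv.Perm (Fin (n + 1))) (x : Euc n) :
    level a v π x = ∑ k : Fin n, a (k + 1) * wall v π k x := by
  simp [level]

lemma pert_apply (a : ℕ → ℝ) (ζ : Finset (Fin (n + 1)) → Euc n) (π : Equiv.Perm (Fin (n + 1)))
    (x : Euc n) :
    pert a v ζ π x = ∑ k : Fin n, (a (k + 1) * wall v π k x) • ζ (flag π k) := by
  simp [pert]

lemma add_pert_apply (hn : 0 < n) (hv : IsRegularSimplex v) {a : ℕ → ℝ}
    (ha : ∀ k, 1 ≤ k → k ≤ n → 0 < a k) (ζ : Finset (Fin (n + 1)) → Euc n)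
    (π : Equiv.Perm (Fin (n + 1))) (x : Euc n) :
    x + pert a v ζ π x =
      ∑ k : Fin n, (a (k + 1) * wall v π k x) • (base a v (flag π k) + ζ (flag π k)) := by
  have h : x = ∑ k : Fin n, (a (k + 1) * wall v π k x) • base a v (flag π k) := by
    conv_lhs => rw [← flag_expand hn hv π x]
    rw [Finset.smul_sum]
    refine Finset.sum_congr rfl fun k _ => ?_
    have hk := ha (k + 1) (by omega) (by have := k.2; omega)
    rw [base, card_flag, smul_smul, smul_smul]
    congr 1
    field_simp
  conv_lhs => rw [pert_apply]; enter [1]; rw [h]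
  rw [← Finset.sum_add_distrib]
  exact Finset.sum_congr rfl fun k _ => (smul_add _ _ _).symm

lemma wall_base (hn : 0 < n) (hv : IsRegularSimplex v) {a : ℕ → ℝ}
    (ha : ∀ k, 1 ≤ k → k ≤ n → 0 < a k) (π : Equiv.Perm (Fin (n + 1))) (k l : Fin n) :
    a (k + 1) * wall v π k (base a v (flag π l)) = if k = l then 1 else 0 := by
  have hn' : (0 : ℝ) < n := by exact_mod_cast hn
  rw [base, map_smul, wall_flag hn hv, card_flag, smul_eq_mul]
  split_ifs with h
  · subst h
    have hk := ha (k + 1) (by omega) (by have := k.2; omega)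
    field_simp
  · simp

/-- The piecewise linear hat function of `S`; it vanishes on the chambers whose flag does not
contain `S`. For `S` empty or everything the infimum is over an empty type, hence zero. -/
def hat (v : Fin (n + 1) → Euc n) (S : Finset (Fin (n + 1))) (x : Euc n) : ℝ :=
  max 0 (⨅ q : {i // i ∈ S} × {i // i ∉ S}, (ell v q.1 x - ell v q.2 x))

lemma hat_sub_le (hv : IsRegularSimplex v) (S : Finset (Fin (n + 1))) (x y : Euc n) :
    hat v S x ≤ hat v S y + 2 * ‖x - y‖ := by
  have h0 := norm_nonneg (x - y)
  unfold hat
  rcases isEmpty_or_nonempty ({i // i ∈ S} × {i // i ∉ S}) with h | h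
  · rw [Real.iInf_of_isEmpty, Real.iInf_of_isEmpty]; simp
  · refine max_le (add_nonneg (le_max_left _ _) (by linarith)) ?_
    have h1 : (⨅ q : {i // i ∈ S} × {i // i ∉ S}, (ell v q.1 x - ell v q.2 x)) - 2 * ‖x - y‖ ≤
        ⨅ q : {i // i ∈ S} × {i // i ∉ S}, (ell v q.1 y - ell v q.2 y) := by
      refine le_ciInf fun q => ?_
      have h2 := ciInf_le (Finite.bddBelow_range
        fun q : {i // i ∈ S} × {i // i ∉ S} => ell v q.1 x - ell v q.2 x) q
      have h3 := abs_le.mp (abs_ell_le hv q.1 (x - y))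
      have h4 := abs_le.mp (abs_ell_le hv q.2 (x - y))
      rw [map_sub] at h3 h4
      linarith [h3.2, h4.1]
    have h2 := le_max_right 0 (⨅ q : {i // i ∈ S} × {i // i ∉ S}, (ell v q.1 y - ell v q.2 y))
    linarith

lemma hat_lip (hv : IsRegularSimplex v) (S : Finset (Fin (n + 1))) (x y : Euc n) :
    |hat v S x - hat v S y| ≤ 2 * ‖x - y‖ := by
  have h1 := hat_sub_le hv S x y
  have h2 := hat_sub_le hv S y x
  rw [norm_sub_rev] at h2
  rw [abs_le]; constructor <;> linarith

lemma hat_flag {π : Equiv.Perm (Fin (n + 1))} {x : Euc n} (hx : x ∈ chamber v π) (k : Fin n) :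
    hat v (flag π k) x = wall v π k x := by
  have hanti := (chamber_anti hx).antitone
  have hm : π k.castSucc ∈ flag π k := (mem_flag _ _ _).mpr le_rfl
  have hm' : π k.succ ∉ flag π k := by rw [mem_flag, Fin.le_def]; simp
  have e : (⨅ q : {i // i ∈ flag π k} × {i // i ∉ flag π k}, (ell v q.1 x - ell v q.2 x)) =
      wall v π k x := by
    have : Nonempty ({i // i ∈ flag π k} × {i // i ∉ flag π k}) := ⟨⟨⟨_, hm⟩, ⟨_, hm'⟩⟩⟩
    refine le_antisymm (ciInf_le (Finite.bddBelow_range _)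
      (⟨⟨_, hm⟩, ⟨_, hm'⟩⟩ : {i // i ∈ flag π k} × {i // i ∉ flag π k})) (le_ciInf ?_)
    rintro ⟨⟨i, hi⟩, ⟨l, hl⟩⟩
    obtain ⟨i, rfl⟩ := π.surjective i
    obtain ⟨l, rfl⟩ := π.surjective l
    rw [mem_flag] at hi hl
    have h1 := hanti hi
    have hl' : k.succ ≤ l := by
      rw [Fin.le_def] at hl ⊢; simp at hl ⊢; omega
    have h2 := hanti hl'
    simp only at h1 h2 ⊢
    rw [wall_apply]; linarith
  rw [hat, e]
  exact max_eq_right (hx k).le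

lemma hat_eq_zero {π : Equiv.Perm (Fin (n + 1))} {x : Euc n} (hx : x ∈ chamber v π)
    {S : Finset (Fin (n + 1))} (hS : ∀ k, flag π k ≠ S) : hat v S x = 0 := by
  unfold hat
  rcases isEmpty_or_nonempty ({i // i ∈ S} × {i // i ∉ S}) with h | h
  · rw [Real.iInf_of_isEmpty]; simp
  refine max_eq_left ?_
  by_contra! hpos
  have hlt : ∀ i l, i ∈ S → l ∉ S → ell v l x < ell v i x := by
    intro i l hi hl
    have := ciInf_le (Finite.bddBelow_range
        fun q : {i // i ∈ S} × {i // i ∉ S} => ell v q.1 x - ell v q.2 x) ⟨⟨i, hi⟩, ⟨l, hl⟩⟩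
    simp only at this
    linarith
  obtain ⟨⟨⟨i0, hi0⟩, ⟨l0, hl0⟩⟩⟩ := h
  -- the preimage of `S` under `π` is an initial segment
  have hseg : ∀ m m', π m ∈ S → π m' ∉ S → m < m' := by
    intro m m' hm hm'
    exact (chamber_anti hx).lt_iff_gt.mp (hlt _ _ hm hm')
  obtain ⟨i, rfl⟩ := π.surjective i0
  obtain ⟨l, rfl⟩ := π.surjective l0
  obtain ⟨M, hM, hMmax⟩ := (Finset.univ.filter fun m => π m ∈ S).exists_maximal
    ⟨i, by simpa using hi0⟩
  simp only [Finset.mem_filter, Finset.mem_univ, true_and] at hM hMmax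
  have hMl : M < l := hseg M l hM hl0
  have hMlast : M ≠ Fin.last n := fun h => by
    rw [h] at hMl; exact absurd (Fin.le_last l) (not_le.mpr hMl)
  refine hS (M.castPred hMlast) ?_
  ext y
  obtain ⟨m, rfl⟩ := π.surjective y
  rw [mem_flag, Fin.castSucc_castPred]
  constructor
  · intro h
    by_contra hm
    exact absurd (hseg M m hM hm) (not_lt.mpr h)
  · intro h
    by_contra hm
    exact hm (hMmax h (le_of_lt (not_le.mp hm)))

/-- The piecewise linear map which moves every base point `b_S` to `b_S + ζ S`. -/
def plMap (a : ℕ → ℝ) (v : Fin (n + 1) → Euc n) (ζ : Finset (Fin (n + 1)) → Euc n)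
    (x : Euc n) : Euc n :=
  x + ∑ S : Finset (Fin (n + 1)), (a S.card * hat v S x) • ζ S

lemma plMap_chamber (a : ℕ → ℝ) (ζ : Finset (Fin (n + 1)) → Euc n)
    {π : Equiv.Perm (Fin (n + 1))} {x : Euc n} (hx : x ∈ chamber v π) :
    plMap a v ζ x = x + pert a v ζ π x := by
  rw [plMap, pert_apply]
  congr 1
  symm
  refine Finset.sum_of_injOn (flag π) (flag_injective π).injOn (fun _ _ => by simp) ?_ ?_
  · intro S _ hS
    rw [hat_eq_zero hx, mul_zero, zero_smul]
    intro k hk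
    exact hS ⟨k, by simp, hk⟩
  · intro k _
    rw [hat_flag hx, card_flag]

/-- `plMap` differs from the identity by a map with small Lipschitz constant. -/
lemma plMap_sub (hv : IsRegularSimplex v) {a : ℕ → ℝ} {ζ : Finset (Fin (n + 1)) → Euc n} {r : ℝ}
    (hζ : ∀ S, ‖ζ S‖ ≤ r) (x y : Euc n) :
    ‖(plMap a v ζ x - plMap a v ζ y) - (x - y)‖ ≤
      (2 * (∑ S : Finset (Fin (n + 1)), |a S.card|) * r) * ‖x - y‖ := by
  have e : (plMap a v ζ x - plMap a v ζ y) - (x - y) =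
      ∑ S : Finset (Fin (n + 1)), (a S.card * (hat v S x - hat v S y)) • ζ S := by
    simp only [plMap, mul_sub, sub_smul, Finset.sum_sub_distrib]; abel
  rw [e]
  calc _ ≤ ∑ S : Finset (Fin (n + 1)), ‖(a S.card * (hat v S x - hat v S y)) • ζ S‖ :=
        norm_sum_le _ _
    _ ≤ ∑ S : Finset (Fin (n + 1)), |a S.card| * (2 * ‖x - y‖ * r) := by
        refine Finset.sum_le_sum fun S _ => ?_
        rw [norm_smul, Real.norm_eq_abs, abs_mul, mul_assoc]
        refine mul_le_mul_of_nonneg_left ?_ (abs_nonneg _)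
        exact mul_le_mul (hat_lip hv S x y) (hζ S) (norm_nonneg _) (by positivity)
    _ = _ := by rw [← Finset.sum_mul]; ring

lemma plMap_injective (hv : IsRegularSimplex v) {a : ℕ → ℝ} {ζ : Finset (Fin (n + 1)) → Euc n}
    {r : ℝ} (hζ : ∀ S, ‖ζ S‖ ≤ r)
    (hr : 2 * (∑ S : Finset (Fin (n + 1)), |a S.card|) * r < 1) :
    Function.Injective (plMap a v ζ) := by
  intro x y hxy
  have h := plMap_sub (a := a) hv hζ x y
  rw [hxy, sub_self, zero_sub, norm_neg] at h
  by_contra hne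
  have hpos : 0 < ‖x - y‖ := norm_pos_iff.mpr (sub_ne_zero.mpr hne)
  have := mul_lt_mul_of_pos_right hr hpos
  linarith

lemma plMap_continuous (hv : IsRegularSimplex v) {a : ℕ → ℝ}
    {ζ : Finset (Fin (n + 1)) → Euc n} : Continuous (plMap a v ζ) := by
  have hc : ∀ S, Continuous (hat v S) := fun S => by
    have : LipschitzWith 2 (hat v S) := LipschitzWith.of_dist_le_mul fun x y => by
      rw [Real.dist_eq, dist_eq_norm]; exact hat_lip hv S x y
    exact this.continuous
  unfold plMap
  fun_prop

end chambers

/-! ### Determinant expansion and averaging of the traces -/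

section traces

variable {n : ℕ} {v : Fin (n + 1) → Euc n}

/-- The first order expansion of the determinant at the identity. -/
lemma det_estimate (n : ℕ) {ε : ℝ} (hε : 0 < ε) :
    ∃ r > 0, ∀ N : Euc n →L[ℝ] Euc n, ‖N‖ ≤ r →
      |LinearMap.det ((1 + N : Euc n →L[ℝ] Euc n) : Euc n →ₗ[ℝ] Euc n) - 1 -
        LinearMap.trace ℝ (Euc n) (N : Euc n →ₗ[ℝ] Euc n)| ≤ ε * ‖N‖ := by
  obtain ⟨b, hb⟩ : ∃ b, b = (EuclideanSpace.basisFun (Fin n) ℝ).toBasis := ⟨_, rfl⟩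
  set f : (Euc n →L[ℝ] Euc n) → ℝ := fun N =>
    LinearMap.det ((1 + N : Euc n →L[ℝ] Euc n) : Euc n →ₗ[ℝ] Euc n) with hf
  have hfm : ∀ N, f N = (1 + LinearMap.toMatrix b b (N : Euc n →ₗ[ℝ] Euc n)).det := by
    intro N
    simp only [hf]
    rw [← LinearMap.det_toMatrix b]
    congr 1
    rw [ContinuousLinearMap.toLinearMap_add, map_add]
    congr 1
    exact LinearMap.toMatrix_one b
  have hdiff : Differentiable ℝ f := by
    have e : f = fun N => ∑ τ : Equiv.Perm (Fin n), Equiv.Perm.sign τ •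
        ∏ i, ((1 : Matrix (Fin n) (Fin n) ℝ) (τ i) i + (N (b i)) (τ i)) := by
      funext N
      rw [hfm, Matrix.det_apply]
      refine Finset.sum_congr rfl fun τ _ => ?_
      congr 1
      refine Finset.prod_congr rfl fun i _ => ?_
      rw [Matrix.add_apply, LinearMap.toMatrix_apply]
      rw [hb]; rfl
    rw [e]
    have hentry : ∀ (i j : Fin n), ContDiff ℝ 1 fun N : Euc n →L[ℝ] Euc n => (N (b i)) j := by
      intro i j
      have h1 : ContDiff ℝ 1 fun N : Euc n →L[ℝ] Euc n => N (b i) := by fun_prop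
      exact (EuclideanSpace.proj (𝕜 := ℝ) j).contDiff.comp h1
    refine Differentiable.fun_sum fun τ _ => ?_
    refine Differentiable.fun_const_smul ?_ _
    exact (contDiff_prod fun i _ => contDiff_const.add (hentry i (τ i))).differentiable one_ne_zero
  obtain ⟨L, hL⟩ : ∃ L, HasFDerivAt f L 0 := ⟨_, (hdiff 0).hasFDerivAt⟩
  have hLt : ∀ N, L N = LinearMap.trace ℝ (Euc n) (N : Euc n →ₗ[ℝ] Euc n) := by
    intro N
    have h1 : HasDerivAt (fun t : ℝ => t • N) N 0 := by
      simpa using (hasDerivAt_id (0 : ℝ)).smul_const N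
    have h2 : HasDerivAt (fun t : ℝ => f (t • N)) (L N) 0 := by
      have h0 : (fun t : ℝ => t • N) 0 = 0 := zero_smul ℝ N
      have hL' : HasFDerivAt f L ((fun t : ℝ => t • N) 0) := by rw [h0]; exact hL
      exact hL'.comp_hasDerivAt 0 h1
    set A := LinearMap.toMatrix b b (N : Euc n →ₗ[ℝ] Euc n) with hA
    obtain ⟨p, hp⟩ : ∃ p : Polynomial ℝ, ∀ t : ℝ,
        (1 + t • A).det = 1 + A.trace * t + p.eval t * t ^ 2 :=
      ⟨_, fun t => Matrix.det_one_add_smul t A⟩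
    have h3 : (fun t : ℝ => f (t • N)) = fun t => 1 + A.trace * t + p.eval t * t ^ 2 := by
      funext t
      rw [hfm, ContinuousLinearMap.toLinearMap_smul, map_smul, hp]
    rw [h3] at h2
    have h4 : HasDerivAt (fun t : ℝ => 1 + A.trace * t + p.eval t * t ^ 2) A.trace 0 := by
      have h5 := (((hasDerivAt_id (0 : ℝ)).const_mul A.trace).const_add 1).add
        ((p.hasDerivAt 0).mul (hasDerivAt_pow 2 (0 : ℝ)))
      refine h5.congr_deriv ?_
      simp
    rw [h2.unique h4, hA, LinearMap.trace_eq_matrix_trace ℝ b]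
  have hlo := (hasFDerivAt_iff_isLittleO_nhds_zero.mp hL).def hε
  obtain ⟨r, hr, hball⟩ := Metric.eventually_nhds_iff.mp hlo
  refine ⟨r / 2, by positivity, fun N hN => ?_⟩
  have h := hball (y := N) (by rw [dist_zero_right]; linarith)
  rw [zero_add, hLt, Real.norm_eq_abs] at h
  have h0 : f 0 = 1 := by simp [hf]
  rw [h0] at h
  exact h

lemma trace_pert (a : ℕ → ℝ) (ζ : Finset (Fin (n + 1)) → Euc n) (π : Equiv.Perm (Fin (n + 1))) :
    LinearMap.trace ℝ (Euc n) (pert a v ζ π : Euc n →ₗ[ℝ] Euc n) =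
      ∑ k : Fin n, a (k + 1) * wall v π k (ζ (flag π k)) := by
  have e : (pert a v ζ π : Euc n →ₗ[ℝ] Euc n) =
      ∑ k : Fin n, ((a (k + 1) • wall v π k : Euc n →L[ℝ] ℝ) : Euc n →ₗ[ℝ] ℝ).smulRight
        (ζ (flag π k)) := by
    ext x : 1
    rw [ContinuousLinearMap.coe_coe, pert_apply]
    simp
  rw [e, map_sum]
  refine Finset.sum_congr rfl fun k _ => ?_
  rw [LinearMap.trace_smulRight]
  simp

lemma flag_mul_swap (π : Equiv.Perm (Fin (n + 1))) (k : Fin n) {j m : Fin (n + 1)}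
    (h : j ≤ k.castSucc ↔ m ≤ k.castSucc) :
    flag (π * Equiv.swap j m) k = flag π k := by
  ext x
  obtain ⟨y, rfl⟩ := (π * Equiv.swap j m).surjective x
  rw [mem_flag, Equiv.Perm.mul_apply, mem_flag]
  by_cases hj : y = j
  · subst hj; rw [Equiv.swap_apply_left]; exact h
  by_cases hm : y = m
  · subst hm; rw [Equiv.swap_apply_right]; exact h.symm
  rw [Equiv.swap_apply_of_ne_of_ne hj hm]

lemma sum_perm_eq (ζ : Finset (Fin (n + 1)) → Euc n) (k : Fin n) {j m : Fin (n + 1)}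
    (h : j ≤ k.castSucc ↔ m ≤ k.castSucc) :
    ∑ π : Equiv.Perm (Fin (n + 1)), ell v (π j) (ζ (flag π k)) =
      ∑ π : Equiv.Perm (Fin (n + 1)), ell v (π m) (ζ (flag π k)) := by
  rw [← Equiv.sum_comp (Equiv.mulRight (Equiv.swap j m))]
  refine Finset.sum_congr rfl fun π _ => ?_
  rw [Equiv.coe_mulRight, flag_mul_swap π k h, Equiv.Perm.mul_apply, Equiv.swap_apply_left]

/-- Averaged over all chambers, the trace of the perturbation only depends on the products
`⟨ζ S, ∑ i ∈ S, v i⟩`. -/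
lemma sum_trace (hn : 0 < n) (hv : IsRegularSimplex v) (a : ℕ → ℝ)
    (ζ : Finset (Fin (n + 1)) → Euc n) :
    ∑ π : Equiv.Perm (Fin (n + 1)), ∑ k : Fin n, a (k + 1) * wall v π k (ζ (flag π k)) =
      ∑ π : Equiv.Perm (Fin (n + 1)), ∑ k : Fin n,
        a (k + 1) * ((n + 1) / ((k + 1) * (n - k))) * ⟪ζ (flag π k), vsum v (flag π k)⟫ := by
  rw [Finset.sum_comm]
  rw [Finset.sum_comm (s := (Finset.univ : Finset (Equiv.Perm (Fin (n + 1)))))]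
  refine Finset.sum_congr rfl fun k _ => ?_
  have hk : (k : ℝ) + 1 ≤ n := by exact_mod_cast k.2
  have hk0 : (0 : ℝ) ≤ k := Nat.cast_nonneg _
  obtain ⟨I, hI⟩ : ∃ I, I = ∑ π : Equiv.Perm (Fin (n + 1)), ⟪ζ (flag π k), vsum v (flag π k)⟫ :=
    ⟨_, rfl⟩
  have h1 : ((k : ℝ) + 1) * ∑ π : Equiv.Perm (Fin (n + 1)), ell v (π k.castSucc) (ζ (flag π k))
      = I := by
    have e : ∀ π : Equiv.Perm (Fin (n + 1)), ⟪ζ (flag π k), vsum v (flag π k)⟫ =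
        ∑ m ∈ Finset.Iic k.castSucc, ell v (π m) (ζ (flag π k)) := by
      intro π
      rw [inner_vsum, flag, Finset.sum_map]; rfl
    rw [hI, Finset.sum_congr rfl fun π _ => e π, Finset.sum_comm]
    rw [Finset.sum_congr rfl fun m hm => sum_perm_eq ζ k (j := m) (m := k.castSucc)
      (by simpa using hm)]
    rw [Finset.sum_const, Fin.card_Iic, nsmul_eq_mul]
    simp
  have h2 : ((n : ℝ) - k) * ∑ π : Equiv.Perm (Fin (n + 1)), ell v (π k.succ) (ζ (flag π k))
      = -I := by
    have e : ∀ π : Equiv.Perm (Fin (n + 1)), ⟪ζ (flag π k), vsum v (flag π k)⟫ =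
        -∑ m ∈ Finset.Ioi k.castSucc, ell v (π m) (ζ (flag π k)) := by
      intro π
      rw [inner_vsum, flag, Finset.sum_map]
      have h := sum_ell hn hv (ζ (flag π k))
      rw [← Equiv.sum_comp π, ← Finset.sum_add_sum_compl (Finset.Iic k.castSucc)] at h
      have hc : (Finset.Iic k.castSucc)ᶜ = Finset.Ioi k.castSucc := by ext; simp
      rw [hc] at h
      change ∑ m ∈ Finset.Iic k.castSucc, ell v (π m) (ζ (flag π k)) = _
      unfold flag at h ⊢
      linarith
    rw [hI, Finset.sum_congr rfl fun π _ => e π, Finset.sum_neg_distrib, neg_neg,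
      Finset.sum_comm]
    rw [Finset.sum_congr rfl fun m hm => sum_perm_eq ζ k (j := m) (m := k.succ)
      (by
        have : k.castSucc < m := by simpa using hm
        constructor
        · intro h; exact absurd h (not_le.mpr this)
        · intro h; rw [Fin.le_def] at h; simp at h)]
    rw [Finset.sum_const, Fin.card_Ioi, nsmul_eq_mul]
    rw [Nat.cast_sub (by simp), Nat.cast_sub (by simp)]
    simp
  rw [← Finset.mul_sum, ← Finset.mul_sum, ← hI, mul_assoc]
  congr 1
  simp only [wall_apply, Finset.sum_sub_distrib]
  have hk1 : (k : ℝ) + 1 ≠ 0 := by positivity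
  have hk2 : (n : ℝ) - k ≠ 0 := by intro h; linarith
  have h1' := eq_div_of_mul_eq hk1 ((mul_comm _ _).trans h1)
  have h2' := eq_div_of_mul_eq hk2 ((mul_comm _ _).trans h2)
  rw [h1', h2']
  field_simp
  ring

end traces

/-! ### Volumes of the chamber pieces -/

section pieces

variable {n : ℕ} {v : Fin (n + 1) → Euc n}

lemma chamber_disjoint {π π' : Equiv.Perm (Fin (n + 1))} (h : π ≠ π') :
    Disjoint (chamber v π) (chamber v π') := by
  rw [Set.disjoint_left]
  intro x hx hx'
  apply h
  have h2 := chamber_anti hx'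
  have h1 := chamber_anti hx
  -- the permutation `π⁻¹ π'` is increasing, hence the identity
  have hmono : StrictMono (π.symm ∘ π') := by
    intro m m' hmm
    have h3 := h2 hmm
    have h4 : ell v (π (π.symm (π' m'))) x < ell v (π (π.symm (π' m))) x := by
      simpa using h3
    exact h1.lt_iff_gt.mp h4
  have hid : π.symm ∘ π' = id := by
    have hr : Set.range (π.symm ∘ π') = Set.range (id : Fin (n + 1) → Fin (n + 1)) := by
      rw [Set.range_id, (π.symm.surjective.comp π'.surjective).range_eq]
    exact (StrictMono.range_inj hmono strictMono_id).mp hr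
  ext m
  have := congrFun hid m
  simp only [Function.comp_apply, id] at this
  rw [Equiv.symm_apply_eq] at this
  exact congrArg Fin.val this.symm

lemma exists_chamber {x : Euc n} (hx : Function.Injective fun i => ell v i x) :
    ∃ π, x ∈ chamber v π := by
  refine ⟨Tuple.sort fun i => -ell v i x, fun k => ?_⟩
  have hm := Tuple.monotone_sort fun i => -ell v i x
  have hle := hm (Fin.castSucc_lt_succ (i := k)).le
  simp only [Function.comp_apply] at hle
  rw [wall_apply]
  have hne : ell v ((Tuple.sort fun i => -ell v i x) k.castSucc) x ≠
      ell v ((Tuple.sort fun i => -ell v i x) k.succ) x := by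
    intro h
    have := (Tuple.sort fun i => -ell v i x).injective (hx h)
    exact (Fin.castSucc_lt_succ (i := k)).ne this
  rcases lt_or_eq_of_le hle with h | h
  · linarith
  · exact absurd (by linarith) hne

lemma chamber_isOpen (π : Equiv.Perm (Fin (n + 1))) : IsOpen (chamber v π) := by
  have : chamber v π = ⋂ k, {x | 0 < wall v π k x} := by ext; simp [chamber]
  rw [this]
  exact isOpen_iInter_of_finite fun k => isOpen_lt continuous_const (wall v π k).continuous

/-- The points with two equal coordinates form a null set. -/
lemma volume_compl_chambers (hn : 0 < n) (hv : IsRegularSimplex v) :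
    volume (⋃ π, chamber v π)ᶜ = 0 := by
  have hn' : (0 : ℝ) < n := by exact_mod_cast hn
  have hsub : (⋃ π, chamber v π)ᶜ ⊆
      ⋃ q : {q : Fin (n + 1) × Fin (n + 1) // q.1 ≠ q.2},
        ((ell v q.1.1 - ell v q.1.2 : Euc n →L[ℝ] ℝ) : Euc n →ₗ[ℝ] ℝ).ker := by
    intro x hx
    have hninj : ¬Function.Injective fun i => ell v i x := fun h =>
      hx (by obtain ⟨π, hπ⟩ := exists_chamber h; exact Set.mem_iUnion.mpr ⟨π, hπ⟩)
    rw [Function.Injective] at hninj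
    push Not at hninj
    obtain ⟨i, l, hil, hne⟩ := hninj
    refine Set.mem_iUnion.mpr ⟨⟨(i, l), hne⟩, ?_⟩
    simp [hil]
  refine measure_mono_null hsub ((measure_iUnion_null_iff).mpr fun q => ?_)
  refine Measure.addHaar_submodule _ _ fun htop => ?_
  have : v q.1.1 ∈ (⊤ : Submodule ℝ (Euc n)) := trivial
  rw [← htop] at this
  simp only [LinearMap.mem_ker, ContinuousLinearMap.coe_coe,
    sub_apply] at this
  rw [ell_self hv, ell_ne hv q.2.symm] at this
  have : (0 : ℝ) < 1 / n := by positivity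
  linarith

/-- The part of the chamber of `π` below the hyperplane through the base points of its flag. -/
def piece (a : ℕ → ℝ) (v : Fin (n + 1) → Euc n) (π : Equiv.Perm (Fin (n + 1))) :
    Set (Euc n) :=
  {x ∈ chamber v π | level a v π x ≤ 1}

lemma piece_measurable (a : ℕ → ℝ) (π : Equiv.Perm (Fin (n + 1))) :
    MeasurableSet (piece a v π) :=
  (chamber_isOpen π).measurableSet.inter
    (isClosed_le (level a v π).continuous continuous_const).measurableSet

/-- The linear map permuting the vertices of the simplex by `π`. -/
def permMap (v : Fin (n + 1) → Euc n) (π : Equiv.Perm (Fin (n + 1))) : Euc n →ₗ[ℝ] Euc n :=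
  ((n : ℝ) / (n + 1)) • ∑ i, (ell v i : Euc n →ₗ[ℝ] ℝ).smulRight (v (π i))

lemma ell_permMap (hn : 0 < n) (hv : IsRegularSimplex v) (π : Equiv.Perm (Fin (n + 1)))
    (i : Fin (n + 1)) (x : Euc n) : ell v (π i) (permMap v π x) = ell v i x := by
  have hn' : (0 : ℝ) < n := by exact_mod_cast hn
  have e : permMap v π x = ((n : ℝ) / (n + 1)) • ∑ j, ell v (π.symm j) x • v j := by
    rw [← Equiv.sum_comp π]
    simp [permMap]
  have hs : ∑ j, ell v (π.symm j) x = 0 := by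
    rw [Equiv.sum_comp π.symm fun j => ell v j x]; exact sum_ell hn hv x
  rw [e, map_smul, ell_comb hv, hs, smul_eq_mul, Equiv.symm_apply_apply]
  field_simp
  ring

lemma volume_piece (hn : 0 < n) (hv : IsRegularSimplex v) (a : ℕ → ℝ)
    (π : Equiv.Perm (Fin (n + 1))) :
    volume (piece a v π) = volume (piece a v 1) := by
  have hinner : ∀ x y, ⟪permMap v π x, permMap v π y⟫ = ⟪x, y⟫ := by
    intro x y
    rw [inner_eq_sum hn hv, inner_eq_sum hn hv x y, ← Equiv.sum_comp π]
    simp only [ell_permMap hn hv]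
  set R : Euc n →ₗᵢ[ℝ] Euc n := (permMap v π).isometryOfInner hinner with hR
  have hRx : ∀ x, R x = permMap v π x := fun x => rfl
  set R' : Euc n ≃ₗᵢ[ℝ] Euc n := R.toLinearIsometryEquiv rfl with hR'
  have hR'x : ∀ x, R' x = permMap v π x := fun x => rfl
  have hw : ∀ k x, wall v π k (R' x) = wall v 1 k x := by
    intro k x
    rw [wall_apply, wall_apply, hR'x, ell_permMap hn hv, ell_permMap hn hv]; rfl
  have hpre : R' ⁻¹' (piece a v π) = piece a v 1 := by
    ext x
    simp only [piece, chamber, Set.mem_preimage, Set.mem_ofPred_eq, level_apply, hw]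
  rw [← hpre]
  exact (R'.measurePreserving.measure_preimage
    (piece_measurable a π).nullMeasurableSet).symm

/-- A set which is contained in the pieces, up to the walls, has at most their total volume. -/
lemma volume_le_pieces (hn : 0 < n) (hv : IsRegularSimplex v) (a : ℕ → ℝ) {P : Set (Euc n)}
    (hP : ∀ π, ∀ x ∈ chamber v π, x ∈ P → level a v π x ≤ 1) :
    volume P ≤ (n + 1).factorial * volume (piece a v 1) := by
  have hsub : P ⊆ (⋃ π, chamber v π)ᶜ ∪ ⋃ π, piece a v π := by
    intro x hx
    by_cases h : x ∈ ⋃ π, chamber v π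
    · right
      obtain ⟨π, hπ⟩ := Set.mem_iUnion.mp h
      exact Set.mem_iUnion.mpr ⟨π, hπ, hP π x hπ hx⟩
    · left; exact h
  calc volume P ≤ volume (⋃ π, chamber v π)ᶜ + volume (⋃ π, piece a v π) :=
        (measure_mono hsub).trans (measure_union_le _ _)
    _ ≤ 0 + ∑ π : Equiv.Perm (Fin (n + 1)), volume (piece a v π) := by
        rw [volume_compl_chambers hn hv]
        gcongr
        exact measure_iUnion_fintype_le _ _
    _ = _ := by
        simp only [volume_piece hn hv a, zero_add, Finset.sum_const, Finset.card_univ,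
          Fintype.card_perm, Fintype.card_fin, nsmul_eq_mul]

/-- The homothetic image of the top layer of a piece used for the extra volume. -/
lemma volume_layer (a : ℕ → ℝ) (hn : 0 < n) (π : Equiv.Perm (Fin (n + 1))) {γ : ℝ} (hγ0 : 0 ≤ γ)
    (hγ : γ < 1) (hfin : volume (piece a v π) ≠ ⊤) (z : Euc n) :
    (2⁻¹ : ℝ) ^ n * γ * (volume (piece a v π)).toReal ≤
      (volume ((fun w => (2⁻¹ : ℝ) • z + (2⁻¹ : ℝ) • w) ''
        {w ∈ piece a v π | 1 - γ < level a v π w})).toReal := by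
  set X : Set (Euc n) := {w ∈ piece a v π | 1 - γ < level a v π w} with hX
  set Y : Set (Euc n) := {w ∈ piece a v π | level a v π w ≤ 1 - γ} with hY
  have hγ' : 0 < 1 - γ := by linarith
  have himg : (fun w => (2⁻¹ : ℝ) • z + (2⁻¹ : ℝ) • w) '' X =
      (fun w => (2⁻¹ : ℝ) • z + w) '' ((2⁻¹ : ℝ) • X) := by
    rw [← Set.image_smul, Set.image_image]
  have hXfin : volume X ≠ ⊤ := measure_ne_top_of_subset (fun w hw => hw.1) hfin
  have hYfin : volume Y ≠ ⊤ := measure_ne_top_of_subset (fun w hw => hw.1) hfin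
  have hv1 : (volume ((fun w => (2⁻¹ : ℝ) • z + (2⁻¹ : ℝ) • w) '' X)).toReal =
      (2⁻¹ : ℝ) ^ n * (volume X).toReal := by
    rw [himg, Set.image_add_left, measure_preimage_add, Measure.addHaar_smul, ENNReal.toReal_mul,
      ENNReal.toReal_ofReal (abs_nonneg _), finrank_euclideanSpace_fin, abs_of_nonneg (by positivity)]
  have hYeq : Y ⊆ (1 - γ) • piece a v π := by
    intro w hw
    refine ⟨(1 - γ)⁻¹ • w, ⟨fun k => ?_, ?_⟩, by
      simp only; rw [smul_smul, mul_inv_cancel₀ hγ'.ne', one_smul]⟩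
    · rw [map_smul, smul_eq_mul]; exact mul_pos (inv_pos.mpr hγ') (hw.1.1 k)
    · rw [map_smul, smul_eq_mul, inv_mul_le_iff₀ hγ', mul_one]; exact hw.2
  have hv2 : (volume Y).toReal ≤ (1 - γ) * (volume (piece a v π)).toReal := by
    have h1 : (volume ((1 - γ) • piece a v π)).toReal =
        (1 - γ) ^ n * (volume (piece a v π)).toReal := by
      rw [Measure.addHaar_smul, ENNReal.toReal_mul,
        ENNReal.toReal_ofReal (abs_nonneg _), finrank_euclideanSpace_fin,
        abs_of_nonneg (by positivity)]
    have h2 : (volume Y).toReal ≤ (volume ((1 - γ) • piece a v π)).toReal := by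
      refine ENNReal.toReal_mono ?_ (measure_mono hYeq)
      rw [Measure.addHaar_smul]
      exact ENNReal.mul_ne_top ENNReal.ofReal_ne_top hfin
    have h3 : (1 - γ) ^ n ≤ 1 - γ :=
      pow_le_of_le_one hγ'.le (by linarith) hn.ne'
    rw [h1] at h2
    exact h2.trans (mul_le_mul_of_nonneg_right h3 ENNReal.toReal_nonneg)
  have hv3 : (volume (piece a v π)).toReal ≤ (volume X).toReal + (volume Y).toReal := by
    rw [← ENNReal.toReal_add hXfin hYfin]
    refine ENNReal.toReal_mono (ENNReal.add_ne_top.mpr ⟨hXfin, hYfin⟩) ?_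
    refine (measure_mono fun w hw => ?_).trans (measure_union_le X Y)
    rcases lt_or_ge (1 - γ) (level a v π w) with h | h
    · exact Or.inl ⟨hw, h⟩
    · exact Or.inr ⟨hw, h⟩
  rw [hv1, mul_assoc]
  refine mul_le_mul_of_nonneg_left ?_ (by positivity)
  linarith

end pieces

/-! ### The lower bound for the volume of a perturbed body -/

section lower

variable {n : ℕ} {v : Fin (n + 1) → Euc n} {a : ℕ → ℝ}
  {ζ : Finset (Fin (n + 1)) → Euc n} {r L : ℝ}

lemma abs_wall_le (hv : IsRegularSimplex v) (π : Equiv.Perm (Fin (n + 1))) (k : Fin n)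
    (x : Euc n) : |wall v π k x| ≤ 2 * ‖x‖ := by
  have h1 := abs_le.mp (abs_ell_le hv (π k.castSucc) x)
  have h2 := abs_le.mp (abs_ell_le hv (π k.succ) x)
  rw [wall_apply, abs_le]
  constructor <;> linarith

lemma abs_level_le (hv : IsRegularSimplex v) (hL : ∑ k : Fin n, |a (k + 1)| ≤ L)
    (π : Equiv.Perm (Fin (n + 1))) (x : Euc n) : |level a v π x| ≤ 2 * L * ‖x‖ := by
  rw [level_apply]
  calc _ ≤ ∑ k : Fin n, |a (k + 1) * wall v π k x| := Finset.abs_sum_le_sum_abs _ _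
    _ ≤ ∑ k : Fin n, |a (k + 1)| * (2 * ‖x‖) := by
        refine Finset.sum_le_sum fun k _ => ?_
        rw [abs_mul]
        exact mul_le_mul_of_nonneg_left (abs_wall_le hv π k x) (abs_nonneg _)
    _ = (∑ k : Fin n, |a (k + 1)|) * (2 * ‖x‖) := (Finset.sum_mul _ _ _).symm
    _ ≤ L * (2 * ‖x‖) := mul_le_mul_of_nonneg_right hL (by positivity)
    _ = _ := by ring

lemma norm_pert_le (hv : IsRegularSimplex v) (hL : ∑ k : Fin n, |a (k + 1)| ≤ L)
    (hζ : ∀ S, ‖ζ S‖ ≤ r) (π : Equiv.Perm (Fin (n + 1))) (x : Euc n) :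
    ‖pert a v ζ π x‖ ≤ 2 * L * r * ‖x‖ := by
  have hr : 0 ≤ r := (norm_nonneg _).trans (hζ ∅)
  rw [pert_apply]
  calc _ ≤ ∑ k : Fin n, ‖(a (k + 1) * wall v π k x) • ζ (flag π k)‖ := norm_sum_le _ _
    _ ≤ ∑ k : Fin n, |a (k + 1)| * (2 * ‖x‖ * r) := by
        refine Finset.sum_le_sum fun k _ => ?_
        rw [norm_smul, Real.norm_eq_abs, abs_mul, mul_assoc]
        refine mul_le_mul_of_nonneg_left ?_ (abs_nonneg _)
        exact mul_le_mul (abs_wall_le hv π k x) (hζ _) (norm_nonneg _) (by positivity)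
    _ = (∑ k : Fin n, |a (k + 1)|) * (2 * ‖x‖ * r) := (Finset.sum_mul _ _ _).symm
    _ ≤ L * (2 * ‖x‖ * r) := mul_le_mul_of_nonneg_right hL (by positivity)
    _ = _ := by ring

lemma abs_trace_le (hv : IsRegularSimplex v) (hL : ∑ k : Fin n, |a (k + 1)| ≤ L)
    (hζ : ∀ S, ‖ζ S‖ ≤ r) (π : Equiv.Perm (Fin (n + 1))) :
    |∑ k : Fin n, a (k + 1) * wall v π k (ζ (flag π k))| ≤ 2 * L * r := by
  have hr : 0 ≤ r := (norm_nonneg _).trans (hζ ∅)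
  calc _ ≤ ∑ k : Fin n, |a (k + 1) * wall v π k (ζ (flag π k))| :=
        Finset.abs_sum_le_sum_abs _ _
    _ ≤ ∑ k : Fin n, |a (k + 1)| * (2 * r) := by
        refine Finset.sum_le_sum fun k _ => ?_
        rw [abs_mul]
        refine mul_le_mul_of_nonneg_left ((abs_wall_le hv π k _).trans ?_) (abs_nonneg _)
        linarith [hζ (flag π k)]
    _ = (∑ k : Fin n, |a (k + 1)|) * (2 * r) := (Finset.sum_mul _ _ _).symm
    _ ≤ L * (2 * r) := mul_le_mul_of_nonneg_right hL (by positivity)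
    _ = _ := by ring

/-- The preimage under the perturbed linear map of the average of the points `b_S + ζ S` of a
flag, shifted by a small vector `q`. -/
lemma exists_apex (hn : 0 < n) (hv : IsRegularSimplex v) (ha : ∀ k, 1 ≤ k → k ≤ n → 0 < a k)
    (hL : ∑ k : Fin n, |a (k + 1)| ≤ L) (hζ : ∀ S, ‖ζ S‖ ≤ r) (hLr : 2 * L * r ≤ 1 / 2)
    (π : Equiv.Perm (Fin (n + 1))) {q : Euc n} (hq : ‖q‖ ≤ r) (hLq : 4 * n * L * r < 1) :
    ∃ z ∈ chamber v π, 1 + level a v π q - 8 * L ^ 2 * r ^ 2 ≤ level a v π z ∧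
      z + pert a v ζ π z =
        (1 / (n : ℝ)) • ∑ k : Fin n, (base a v (flag π k) + ζ (flag π k)) + q := by
  have hn' : (0 : ℝ) < n := by exact_mod_cast hn
  have hr : 0 ≤ r := (norm_nonneg _).trans hq
  have hL0 : 0 ≤ L := (Finset.sum_nonneg fun k _ => abs_nonneg _).trans hL
  obtain ⟨w, hw⟩ : ∃ w, w + pert a v ζ π w = q := by
    have hinj : Function.Injective
        ((1 + pert a v ζ π : Euc n →L[ℝ] Euc n) : Euc n →ₗ[ℝ] Euc n) := by
      rw [← LinearMap.ker_eq_bot, LinearMap.ker_eq_bot']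
      intro x hx
      have h1 : x + pert a v ζ π x = 0 := hx
      have h2 := norm_pert_le hv hL hζ π x
      rw [← neg_eq_of_add_eq_zero_right h1, norm_neg] at h2
      have h3 : 2 * L * r * ‖x‖ ≤ 1 / 2 * ‖x‖ :=
        mul_le_mul_of_nonneg_right hLr (norm_nonneg _)
      have h4 := norm_nonneg x
      exact norm_eq_zero.mp (by linarith)
    obtain ⟨w, hw⟩ := LinearMap.injective_iff_surjective.mp hinj q
    exact ⟨w, hw⟩
  have hpw := norm_pert_le hv hL hζ π w
  have hw2 : ‖w‖ ≤ 2 * r := by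
    have h1 : w = q - pert a v ζ π w := eq_sub_of_add_eq hw
    have h2 : ‖w‖ ≤ ‖q‖ + ‖pert a v ζ π w‖ := by
      conv_lhs => rw [h1]
      exact norm_sub_le _ _
    have h3 : 2 * L * r * ‖w‖ ≤ 1 / 2 * ‖w‖ := mul_le_mul_of_nonneg_right hLr (norm_nonneg _)
    linarith
  have hwall : ∀ k : Fin n, a (k + 1) * wall v π k ((1 / (n : ℝ)) • ∑ l : Fin n, base a v (flag π l)) =
      1 / n := by
    intro k
    rw [map_smul, map_sum, smul_eq_mul, mul_left_comm, Finset.mul_sum,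
      Finset.sum_congr rfl fun l _ => wall_base hn hv ha π k l]
    simp
  refine ⟨(1 / (n : ℝ)) • ∑ k : Fin n, base a v (flag π k) + w, fun k => ?_, ?_, ?_⟩
  · have hk := ha (k + 1) (by omega) (by have := k.2; omega)
    have h1 := abs_le.mp (abs_wall_le hv π k w)
    have h2 : a (k + 1) ≤ L := by
      have := Finset.single_le_sum (f := fun k : Fin n => |a (k + 1)|)
        (fun k _ => abs_nonneg _) (Finset.mem_univ k)
      exact (le_abs_self _).trans (this.trans hL)
    have h3 : 0 < a (k + 1) *
        wall v π k ((1 / (n : ℝ)) • ∑ k : Fin n, base a v (flag π k) + w) := by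
      rw [map_add, mul_add, hwall]
      have h4 : a (k + 1) * (-(4 * r)) ≤ a (k + 1) * wall v π k w :=
        mul_le_mul_of_nonneg_left (by linarith) hk.le
      have h5 : a (k + 1) * (4 * r) ≤ L * (4 * r) :=
        mul_le_mul_of_nonneg_right h2 (by positivity)
      have h6 : L * (4 * r) < 1 / n := by
        rw [lt_div_iff₀ hn']; linarith
      linarith
    exact pos_of_mul_pos_right h3 hk.le
  · have h1 : level a v π ((1 / (n : ℝ)) • ∑ k : Fin n, base a v (flag π k)) = 1 := by
      rw [level_apply, Finset.sum_congr rfl fun k _ => hwall k]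
      simp [hn'.ne']
    have h2 : level a v π w = level a v π q - level a v π (pert a v ζ π w) := by
      rw [← map_sub, ← hw, add_sub_cancel_right]
    have h3 := abs_le.mp (abs_level_le hv hL π (pert a v ζ π w))
    have h4 : 2 * L * ‖pert a v ζ π w‖ ≤ 2 * L * (2 * L * r * (2 * r)) := by
      refine mul_le_mul_of_nonneg_left (hpw.trans ?_) (by positivity)
      exact mul_le_mul_of_nonneg_left hw2 (by positivity)
    rw [map_add, h1, h2]
    nlinarith [h3.2]
  · have h1 : (1 / (n : ℝ)) • ∑ k : Fin n, base a v (flag π k) +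
        pert a v ζ π ((1 / (n : ℝ)) • ∑ k : Fin n, base a v (flag π k)) =
        (1 / (n : ℝ)) • ∑ k : Fin n, (base a v (flag π k) + ζ (flag π k)) := by
      rw [add_pert_apply hn hv ha, Finset.smul_sum (r := 1 / (n : ℝ))
        (f := fun k : Fin n => base a v (flag π k) + ζ (flag π k))]
      exact Finset.sum_congr rfl fun k _ => by rw [hwall]
    rw [map_add, ← h1, ← hw]
    abel

lemma sum_smul_mem {Q : Set (Euc n)} (hQ : Convex ℝ Q) (hQ0 : 0 ∈ Q) {ι : Type*} [Fintype ι]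
    {c : ι → ℝ} {p : ι → Euc n} (hc : ∀ k, 0 ≤ c k) (hc1 : ∑ k, c k ≤ 1) (hp : ∀ k, p k ∈ Q) :
    ∑ k, c k • p k ∈ Q := by
  have h := hQ.sum_mem (t := (Finset.univ : Finset (Option ι)))
    (w := fun o => o.elim (1 - ∑ k, c k) c) (z := fun o => o.elim 0 p) ?_ ?_ ?_
  · simpa [Fintype.sum_option] using h
  · rintro (_ | k) _
    · simpa using hc1
    · exact hc k
  · simp [Fintype.sum_option]
  · rintro (_ | k) _
    · exact hQ0
    · exact hp k

/-- The images of the pieces under the piecewise linear map, together with the image of a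
layer above the piece of `π₀` obtained from a point `z` above it, are disjoint parts of `Q`. -/
lemma volume_lower_aux (hn : 0 < n) (hv : IsRegularSimplex v)
    (ha : ∀ k, 1 ≤ k → k ≤ n → 0 < a k) (hζ : ∀ S, ‖ζ S‖ ≤ r)
    (hr : 2 * (∑ S : Finset (Fin (n + 1)), |a S.card|) * r < 1)
    (hdet : ∀ π, 1 / 2 ≤
      LinearMap.det ((1 + pert a v ζ π : Euc n →L[ℝ] Euc n) : Euc n →ₗ[ℝ] Euc n))
    {Q : Set (Euc n)} (hQ : Convex ℝ Q) (hQ0 : 0 ∈ Q) (hQfin : volume Q ≠ ⊤)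
    (hp : ∀ S : Finset (Fin (n + 1)), 1 ≤ S.card → S.card ≤ n → base a v S + ζ S ∈ Q)
    {π₀ : Equiv.Perm (Fin (n + 1))} {z : Euc n} (hz : z ∈ chamber v π₀)
    (hzQ : z + pert a v ζ π₀ z ∈ Q) {γ : ℝ} (hγ0 : 0 ≤ γ) (hγ1 : γ < 1)
    (hγ : 0 < γ → 1 + γ ≤ level a v π₀ z) :
    volume (piece a v 1) ≠ ⊤ ∧
    (volume (piece a v 1)).toReal *
      (∑ π, LinearMap.det ((1 + pert a v ζ π : Euc n →L[ℝ] Euc n) : Euc n →ₗ[ℝ] Euc n) +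
        (2⁻¹ : ℝ) ^ (n + 1) * γ) ≤ (volume Q).toReal := by
  obtain ⟨D, hD⟩ : ∃ D : Equiv.Perm (Fin (n + 1)) → ℝ, D = fun π =>
    LinearMap.det ((1 + pert a v ζ π : Euc n →L[ℝ] Euc n) : Euc n →ₗ[ℝ] Euc n) := ⟨_, rfl⟩
  have hD2 : ∀ π, 1 / 2 ≤ D π := by rw [hD]; exact hdet
  have hDabs : ∀ π, |D π| = D π := fun π => abs_of_nonneg (by linarith [hD2 π])
  have hinj := plMap_injective (a := a) hv hζ hr
  have hcont := plMap_continuous (a := a) (ζ := ζ) hv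
  have hvol : ∀ π, ∀ s ⊆ chamber v π,
      volume (plMap a v ζ '' s) = ENNReal.ofReal (D π) * volume s := by
    intro π s hs
    have e : plMap a v ζ '' s =
        ((1 + pert a v ζ π : Euc n →L[ℝ] Euc n) : Euc n →ₗ[ℝ] Euc n) '' s :=
      Set.image_congr fun x hx => plMap_chamber a ζ (hs hx)
    rw [e, Measure.addHaar_image_linearMap, ← hDabs, hD]
  have hpieceQ : ∀ π, ∀ x ∈ piece a v π, plMap a v ζ x ∈ Q := by
    intro π x hx
    rw [plMap_chamber a ζ hx.1, add_pert_apply hn hv ha]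
    have h1 := hx.2
    rw [level_apply] at h1
    refine sum_smul_mem hQ hQ0 (fun k => ?_) h1 (fun k => ?_)
    · exact mul_nonneg (ha _ (by omega) (by have := k.2; omega)).le (hx.1 k).le
    · exact hp _ (by rw [card_flag]; omega) (by rw [card_flag]; have := k.2; omega)
  have hfin : volume (piece a v 1) ≠ ⊤ := by
    intro htop
    have h1 : volume (plMap a v ζ '' piece a v 1) ≤ volume Q :=
      measure_mono (Set.image_subset_iff.mpr (hpieceQ 1))
    rw [hvol 1 _ fun x hx => hx.1, htop, ENNReal.mul_top, top_le_iff] at h1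
    · exact hQfin h1
    · exact (ENNReal.ofReal_pos.mpr (by linarith [hD2 1])).ne'
  refine ⟨hfin, ?_⟩
  have hfinπ : ∀ π, volume (piece a v π) ≠ ⊤ := fun π => by rwa [volume_piece hn hv]
  -- the layer of height between `1` and `1 + γ` above the piece of `π₀`
  obtain ⟨X, hX⟩ : ∃ X, X = {x ∈ (fun w => (2⁻¹ : ℝ) • z + (2⁻¹ : ℝ) • w) ''
      {w ∈ piece a v π₀ | 1 - γ < level a v π₀ w} | 0 < γ} := ⟨_, rfl⟩
  have hXcha : X ⊆ chamber v π₀ := by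
    rw [hX]
    rintro _ ⟨⟨w, hw, rfl⟩, -⟩ k
    have h1 := hz k
    have h2 := hw.1.1 k
    simp only [map_add, map_smul, smul_eq_mul]
    positivity
  have hXlevel : ∀ x ∈ X, 1 < level a v π₀ x := by
    rw [hX]
    rintro _ ⟨⟨w, hw, rfl⟩, hγp⟩
    have h1 := hγ hγp
    have h2 := hw.2
    simp only [map_add, map_smul, smul_eq_mul]
    linarith
  have hXQ : ∀ x ∈ X, plMap a v ζ x ∈ Q := by
    intro x hx
    rw [plMap_chamber a ζ (hXcha hx)]
    rw [hX] at hx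
    obtain ⟨⟨w, hw, rfl⟩, -⟩ := hx
    have h1 := hpieceQ π₀ w hw.1
    rw [plMap_chamber a ζ hw.1.1] at h1
    have h2 := hQ hzQ h1 (by norm_num : (0 : ℝ) ≤ 2⁻¹) (by norm_num : (0 : ℝ) ≤ 2⁻¹) (by norm_num)
    convert h2 using 1
    simp only [map_add, map_smul, smul_add]
    abel
  have hXvol : (2⁻¹ : ℝ) ^ n * γ * (volume (piece a v 1)).toReal ≤ (volume X).toReal := by
    rcases hγ0.eq_or_lt with h | h
    · rw [← h]; simp
    · have h1 := volume_layer a hn π₀ hγ0 hγ1 (hfinπ π₀) z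
      rw [volume_piece hn hv] at h1
      have e : X = (fun w => (2⁻¹ : ℝ) • z + (2⁻¹ : ℝ) • w) ''
          {w ∈ piece a v π₀ | 1 - γ < level a v π₀ w} := by
        rw [hX]; ext; simp [h]
      rwa [e]
  have htotal : ∑ π, ENNReal.ofReal (D π) * volume (piece a v 1) +
      ENNReal.ofReal (D π₀) * volume X ≤ volume Q := by
    have hmeas : ∀ π, MeasurableSet (plMap a v ζ '' piece a v π) := fun π =>
      (piece_measurable a π).image_of_continuousOn_injOn hcont.continuousOn hinj.injOn
    have hdisj : Pairwise (Function.onFun Disjoint fun π => plMap a v ζ '' piece a v π) :=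
      fun π π' h => (Set.disjoint_image_iff hinj).mpr
        ((chamber_disjoint h).mono (fun x hx => hx.1) (fun x hx => hx.1))
    have hdisjX : Disjoint (⋃ π, plMap a v ζ '' piece a v π) (plMap a v ζ '' X) := by
      rw [Set.disjoint_iUnion_left]
      intro π
      rw [Set.disjoint_image_iff hinj, Set.disjoint_left]
      intro x hx hxX
      by_cases h : π = π₀
      · subst h
        exact absurd hx.2 (not_le.mpr (hXlevel x hxX))
      · exact Set.disjoint_left.mp (chamber_disjoint h) hx.1 (hXcha hxX)
    have e1 : ∑ π, ENNReal.ofReal (D π) * volume (piece a v 1) =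
        volume (⋃ π, plMap a v ζ '' piece a v π) := by
      rw [measure_iUnion hdisj hmeas, tsum_fintype]
      refine Finset.sum_congr rfl fun π _ => ?_
      rw [hvol π _ fun x hx => hx.1, volume_piece hn hv a π]
    rw [e1, ← hvol π₀ X hXcha, ← measure_union' hdisjX (MeasurableSet.iUnion hmeas)]
    refine measure_mono (Set.union_subset (Set.iUnion_subset fun π => ?_) ?_)
    · exact Set.image_subset_iff.mpr (hpieceQ π)
    · exact Set.image_subset_iff.mpr hXQ
  have hsumfin : ∑ π, ENNReal.ofReal (D π) * volume (piece a v 1) ≠ ⊤ :=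
    ENNReal.sum_ne_top.mpr fun π _ => ENNReal.mul_ne_top ENNReal.ofReal_ne_top hfin
  have hXfin : ENNReal.ofReal (D π₀) * volume X ≠ ⊤ :=
    ne_top_of_le_ne_top hQfin (le_add_self.trans htotal)
  have hreal := ENNReal.toReal_mono hQfin htotal
  rw [ENNReal.toReal_add hsumfin hXfin, ENNReal.toReal_sum fun π _ =>
    ENNReal.mul_ne_top ENNReal.ofReal_ne_top hfin] at hreal
  simp only [ENNReal.toReal_mul] at hreal
  have hDr : ∀ π, (ENNReal.ofReal (D π)).toReal = D π := fun π =>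
    ENNReal.toReal_ofReal (by linarith [hD2 π])
  simp only [hDr] at hreal
  rw [← Finset.sum_mul] at hreal
  have hlast : 1 / 2 * ((2⁻¹ : ℝ) ^ n * γ * (volume (piece a v 1)).toReal) ≤
      D π₀ * (volume X).toReal :=
    mul_le_mul (hD2 π₀) hXvol (mul_nonneg (by positivity) ENNReal.toReal_nonneg)
      (by linarith [hD2 π₀])
  rw [hD] at hreal hlast
  rw [pow_succ]
  linarith

/-- Lower bound for the volume of a convex body `Q` which contains points close to the base
points: up to an error which is small compared with `δ`, the relative gain is the average trace
of the perturbations plus a multiple of the height of an extra point of `Q` above the piece of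
`π₀`. -/
lemma volume_lower (hn : 0 < n) (hv : IsRegularSimplex v)
    (ha : ∀ k, 1 ≤ k → k ≤ n → 0 < a k) {M ε : ℝ} (hM : 0 ≤ M) (hε : 0 < ε) :
    ∃ δ₁ > 0, ∀ δ, 0 < δ → δ < δ₁ → ∀ (P Q : Set (Euc n)) (ζ : Finset (Fin (n + 1)) → Euc n)
      (π₀ : Equiv.Perm (Fin (n + 1))) (q : Euc n),
      (∀ π, ∀ x ∈ chamber v π, x ∈ P → level a v π x ≤ 1) →
      Convex ℝ Q → 0 ∈ Q → volume Q ≠ ⊤ → (∀ S, ‖ζ S‖ ≤ M * δ) →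
      (∀ S : Finset (Fin (n + 1)), 1 ≤ S.card → S.card ≤ n → base a v S + ζ S ∈ Q) →
      ‖q‖ ≤ M * δ →
      (1 / (n : ℝ)) • ∑ k : Fin n, (base a v (flag π₀ k) + ζ (flag π₀ k)) + q ∈ Q →
      (volume P).toReal * (1 + ((n + 1).factorial : ℝ)⁻¹ *
        (∑ π : Equiv.Perm (Fin (n + 1)), ∑ k : Fin n, a (k + 1) * wall v π k (ζ (flag π k)) +
          (2⁻¹ : ℝ) ^ (n + 1) * level a v π₀ q) - ε * δ) ≤ (volume Q).toReal := by
  obtain ⟨L, hL0, hL1, hL2⟩ : ∃ L : ℝ, 0 < L ∧ ∑ S : Finset (Fin (n + 1)), |a S.card| ≤ L ∧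
      ∑ k : Fin n, |a (k + 1)| ≤ L := by
    have h1 : 0 ≤ ∑ S : Finset (Fin (n + 1)), |a S.card| :=
      Finset.sum_nonneg fun _ _ => abs_nonneg _
    have h2 : 0 ≤ ∑ k : Fin n, |a (k + 1)| := Finset.sum_nonneg fun _ _ => abs_nonneg _
    exact ⟨∑ S : Finset (Fin (n + 1)), |a S.card| + ∑ k : Fin n, |a (k + 1)| + 1,
      by linarith, by linarith, by linarith⟩
  obtain ⟨ρ, hρ, hdetest⟩ := det_estimate n (ε := ε / (4 * L * (M + 1))) (by positivity)
  obtain ⟨F, hF⟩ : ∃ F : ℝ, F = ((n + 1).factorial : ℝ) := ⟨_, rfl⟩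
  have hF1 : 1 ≤ F := by rw [hF]; exact_mod_cast Nat.succ_le_of_lt (Nat.factorial_pos _)
  -- all smallness conditions have the form `c * δ < d` with `c ≥ 0` and `d > 0`
  have hsmall : ∀ c d : ℝ, 0 ≤ c → 0 < d → ∃ δ₁ > 0, ∀ δ, 0 < δ → δ < δ₁ → c * δ < d := by
    intro c d hc hd
    refine ⟨d / (c + 1), by positivity, fun δ h1 h2 => ?_⟩
    rw [lt_div_iff₀ (by positivity)] at h2
    linarith
  obtain ⟨d1, hd1, H1⟩ := hsmall (2 * L * M) (min ρ (1 / 4)) (by positivity) (by positivity)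
  obtain ⟨d2, hd2, H2⟩ := hsmall (4 * n * L * M) 1 (by positivity) (by norm_num)
  obtain ⟨d3, hd3, H3⟩ := hsmall (8 * L ^ 2 * M ^ 2) (ε / 2) (by positivity) (by positivity)
  obtain ⟨d4, hd4, H4⟩ := hsmall (ε / 2) (1 / 4) (by positivity) (by norm_num)
  refine ⟨min (min d1 d2) (min d3 d4), by positivity, ?_⟩
  intro δ hδ hδ1 P Q ζ π₀ q hP hQ hQ0 hQfin hζ hp hq hqQ
  simp only [lt_min_iff] at hδ1
  obtain ⟨⟨e1, e2⟩, e3, e4⟩ := hδ1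
  have H1 := lt_min_iff.mp (H1 δ hδ e1)
  have H2 := H2 δ hδ e2
  have H3 := H3 δ hδ e3
  have H4 := H4 δ hδ e4
  obtain ⟨tr, htr⟩ : ∃ tr : Equiv.Perm (Fin (n + 1)) → ℝ,
      tr = fun π => ∑ k : Fin n, a (k + 1) * wall v π k (ζ (flag π k)) := ⟨_, rfl⟩
  have hM0 : 0 ≤ M * δ := by positivity
  have hdetlow : ∀ π, 1 + tr π - ε / 2 * δ ≤
      LinearMap.det ((1 + pert a v ζ π : Euc n →L[ℝ] Euc n) : Euc n →ₗ[ℝ] Euc n) := by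
    intro π
    have hN : ‖pert a v ζ π‖ ≤ 2 * L * (M * δ) :=
      ContinuousLinearMap.opNorm_le_bound _ (by positivity) (norm_pert_le hv hL2 hζ π)
    have h1 := abs_le.mp (hdetest (pert a v ζ π) (by linarith [H1.1]))
    rw [trace_pert] at h1
    have h2 : ε / (4 * L * (M + 1)) * ‖pert a v ζ π‖ ≤ ε / 2 * δ := by
      calc ε / (4 * L * (M + 1)) * ‖pert a v ζ π‖
          ≤ ε / (4 * L * (M + 1)) * (2 * L * (M * δ)) :=
            mul_le_mul_of_nonneg_left hN (by positivity)
        _ = ε / 2 * δ * (M / (M + 1)) := by field_simp; ring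
        _ ≤ ε / 2 * δ * 1 := by
            refine mul_le_mul_of_nonneg_left ?_ (by positivity)
            rw [div_le_one (by positivity)]; linarith
        _ = _ := mul_one _
    simp only [htr]
    linarith [h1.1]
  have hdethalf : ∀ π, 1 / 2 ≤
      LinearMap.det ((1 + pert a v ζ π : Euc n →L[ℝ] Euc n) : Euc n →ₗ[ℝ] Euc n) := by
    intro π
    have h1 := abs_le.mp (abs_trace_le hv hL2 hζ π)
    have h2 := hdetlow π
    simp only [htr] at h2
    linarith [h1.1, H1.2]
  obtain ⟨z, hz, hzlevel, hzq⟩ := exists_apex hn hv ha hL2 hζ (by linarith [H1.2]) π₀ hq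
    (by linarith)
  have hquad : 8 * L ^ 2 * (M * δ) ^ 2 ≤ ε / 2 * δ := by
    have := mul_le_mul_of_nonneg_right H3.le hδ.le
    linarith
  have hlevq := abs_le.mp (abs_level_le hv hL2 π₀ q)
  have hlevq2 : 2 * L * ‖q‖ ≤ 2 * L * (M * δ) := mul_le_mul_of_nonneg_left hq (by positivity)
  obtain ⟨γ, hγ⟩ : ∃ γ : ℝ, γ = max 0 (level a v π₀ q - 8 * L ^ 2 * (M * δ) ^ 2) := ⟨_, rfl⟩
  have hγ0 : 0 ≤ γ := by rw [hγ]; exact le_max_left _ _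
  have hγlow : level a v π₀ q - ε / 2 * δ ≤ γ := by
    rw [hγ]; exact le_trans (by linarith) (le_max_right _ _)
  have hγ1 : γ < 1 := by
    rw [hγ]
    refine max_lt (by norm_num) ?_
    have : 0 ≤ 8 * L ^ 2 * (M * δ) ^ 2 := by positivity
    linarith [hlevq.2, H1.2]
  obtain ⟨hfin, hmain⟩ := volume_lower_aux hn hv ha hζ
    (by
      have := mul_le_mul_of_nonneg_right hL1 hM0
      linarith [H1.2])
    hdethalf hQ hQ0 hQfin hp hz (by rw [hzq]; exact hqQ) hγ0 hγ1
    (by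
      intro hγp
      rcases max_choice 0 (level a v π₀ q - 8 * L ^ 2 * (M * δ) ^ 2) with h | h
      · rw [hγ, h] at hγp; exact absurd hγp (lt_irrefl _)
      · rw [hγ, h]; linarith)
  have hPvol : (volume P).toReal ≤ F * (volume (piece a v 1)).toReal := by
    have h1 := volume_le_pieces hn hv a hP
    have h2 := ENNReal.toReal_mono (ENNReal.mul_ne_top (ENNReal.natCast_ne_top _) hfin) h1
    rwa [ENNReal.toReal_mul, ENNReal.toReal_natCast, ← hF] at h2
  rw [← hF]
  obtain ⟨p, hpdef⟩ : ∃ p, p = (volume (piece a v 1)).toReal := ⟨_, rfl⟩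
  have hp0 : 0 ≤ p := by rw [hpdef]; exact ENNReal.toReal_nonneg
  rw [← hpdef] at hPvol hmain
  obtain ⟨B, hB⟩ : ∃ B, B = 1 + F⁻¹ * (∑ π, tr π + (2⁻¹ : ℝ) ^ (n + 1) * level a v π₀ q) - ε * δ :=
    ⟨_, rfl⟩
  have hFB : F * B ≤
      ∑ π, LinearMap.det ((1 + pert a v ζ π : Euc n →L[ℝ] Euc n) : Euc n →ₗ[ℝ] Euc n) +
        (2⁻¹ : ℝ) ^ (n + 1) * γ := by
    have h1 : F + ∑ π, tr π - F * (ε / 2 * δ) ≤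
        ∑ π, LinearMap.det ((1 + pert a v ζ π : Euc n →L[ℝ] Euc n) : Euc n →ₗ[ℝ] Euc n) := by
      have h := Finset.sum_le_sum fun π (_ : π ∈ Finset.univ) => hdetlow π
      rw [Finset.sum_sub_distrib, Finset.sum_add_distrib] at h
      simp only [Finset.sum_const, Finset.card_univ, Fintype.card_perm, Fintype.card_fin,
        nsmul_eq_mul, ← hF, mul_one] at h
      exact h
    have h2 : (2⁻¹ : ℝ) ^ (n + 1) * level a v π₀ q - F * (ε / 2 * δ) ≤
        (2⁻¹ : ℝ) ^ (n + 1) * γ := by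
      have h3 := mul_le_mul_of_nonneg_left hγlow (by positivity : (0 : ℝ) ≤ (2⁻¹ : ℝ) ^ (n + 1))
      have h4 : (2⁻¹ : ℝ) ^ (n + 1) ≤ 1 := pow_le_one₀ (by norm_num) (by norm_num)
      have h5 : (2⁻¹ : ℝ) ^ (n + 1) * (ε / 2 * δ) ≤ F * (ε / 2 * δ) :=
        mul_le_mul_of_nonneg_right (h4.trans hF1) (by positivity)
      linarith
    have h3 : F * B = F + (∑ π, tr π + (2⁻¹ : ℝ) ^ (n + 1) * level a v π₀ q) - F * (ε * δ) := by
      rw [hB]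
      have : F ≠ 0 := by positivity
      field_simp
    linarith
  have hgoal : (volume P).toReal * B ≤ (volume Q).toReal := by
    rcases le_or_gt B 0 with h | h
    · exact (mul_nonpos_of_nonneg_of_nonpos ENNReal.toReal_nonneg h).trans ENNReal.toReal_nonneg
    · calc (volume P).toReal * B ≤ F * p * B := mul_le_mul_of_nonneg_right hPvol h.le
        _ = p * (F * B) := by ring
        _ ≤ _ := mul_le_mul_of_nonneg_left hFB hp0
        _ ≤ _ := hmain
  rw [hB, htr] at hgoal
  exact hgoal

end lower

/-! ### The two weights and the exchange inequality -/

section assembly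

variable {n : ℕ} {v : Fin (n + 1) → Euc n} {δ : ℝ} {K : Set (Euc n)}

/-- The weight whose base points are the centroids of the faces of `Δₙ`. -/
def wtBody (n k : ℕ) : ℝ := n * k / (n + 1)

/-- The weight whose base points are the centroids of the faces of `Δₙ°`. -/
def wtPolar (n k : ℕ) : ℝ := (n + 1 - k) / (n + 1)

lemma wtBody_pos (k : ℕ) (h1 : 1 ≤ k) (h2 : k ≤ n) : 0 < wtBody n k := by
  have h3 : (1 : ℝ) ≤ k := by exact_mod_cast h1
  have h4 : (k : ℝ) ≤ n := by exact_mod_cast h2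
  unfold wtBody
  have : (0 : ℝ) < n * k := by nlinarith
  positivity

lemma wtPolar_pos (k : ℕ) (_ : 1 ≤ k) (h2 : k ≤ n) : 0 < wtPolar n k := by
  have h4 : (k : ℝ) ≤ n := by exact_mod_cast h2
  unfold wtPolar
  have : (0 : ℝ) < n + 1 - k := by linarith
  positivity

lemma base_wtBody (S : Finset (Fin (n + 1))) (h1 : 1 ≤ S.card) (h2 : S.card ≤ n) :
    base (wtBody n) v S = (1 / (S.card : ℝ)) • vsum v S := by
  have h3 : (1 : ℝ) ≤ S.card := by exact_mod_cast h1
  have h4 : (S.card : ℝ) ≤ n := by exact_mod_cast h2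
  rw [base, wtBody]
  congr 1
  have : (0 : ℝ) < n := by linarith
  field_simp

lemma base_wtPolar (S : Finset (Fin (n + 1))) :
    base (wtPolar n) v S = ((n : ℝ) / (n + 1 - S.card)) • vsum v S := by
  rw [base, wtPolar]
  congr 1
  field_simp

/-- On the chamber of `π`, the gauge of `Δₙ` is the functional of the least coordinate. -/
lemma level_wtBody (hn : 0 < n) (hv : IsRegularSimplex v) (π : Equiv.Perm (Fin (n + 1)))
    (x : Euc n) : level (wtBody n) v π x = -(n * ell v (π (Fin.last n)) x) := by
  have hn' : (0 : ℝ) < n := by exact_mod_cast hn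
  have h : ell v (π (Fin.last n)) x =
      (n : ℝ) / (n + 1) * ∑ k : Fin n, wall v π k x * -(((k : ℝ) + 1) / n) := by
    conv_lhs => rw [← flag_expand hn hv π x]
    rw [map_smul, map_sum, smul_eq_mul]
    congr 1
    refine Finset.sum_congr rfl fun k _ => ?_
    rw [map_smul, ell_vsum hn hv, if_neg, card_flag, smul_eq_mul]
    · push_cast; rfl
    · rw [mem_flag, Fin.le_def]
      have := k.2
      simp
  rw [h, level_apply, Finset.mul_sum, Finset.mul_sum, ← Finset.sum_neg_distrib]
  refine Finset.sum_congr rfl fun k _ => ?_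
  rw [wtBody]
  push_cast
  field_simp

/-- On the chamber of `π`, the gauge of `Δₙ°` is the functional of the greatest coordinate. -/
lemma level_wtPolar (hn : 0 < n) (hv : IsRegularSimplex v) (π : Equiv.Perm (Fin (n + 1)))
    (x : Euc n) : level (wtPolar n) v π x = ell v (π 0) x := by
  have hn' : (0 : ℝ) < n := by exact_mod_cast hn
  have h : ell v (π 0) x =
      (n : ℝ) / (n + 1) * ∑ k : Fin n, wall v π k x * (((n : ℝ) + 1 - (k + 1)) / n) := by
    conv_lhs => rw [← flag_expand hn hv π x]
    rw [map_smul, map_sum, smul_eq_mul]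
    congr 1
    refine Finset.sum_congr rfl fun k _ => ?_
    rw [map_smul, ell_vsum hn hv, if_pos, card_flag, smul_eq_mul]
    · push_cast; rfl
    · rw [mem_flag]
      exact Fin.zero_le _
  rw [h, level_apply, Finset.mul_sum]
  refine Finset.sum_congr rfl fun k _ => ?_
  rw [wtPolar]
  push_cast
  field_simp

lemma inner_vsum_self (hn : 0 < n) (hv : IsRegularSimplex v) (S : Finset (Fin (n + 1))) :
    ⟪vsum v S, vsum v S⟫ = (S.card : ℝ) * (((n : ℝ) + 1 - S.card) / n) := by
  rw [inner_vsum, Finset.sum_congr rfl (fun i hi => (ell_vsum hn hv S i).trans (if_pos hi))]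
  simp

/-- The first-order volume changes of `K` and `K°` have nonnegative sum, by the
tangency inequality at every face. -/
lemma trace_nonneg (hn : 0 < n) (hv : IsRegularSimplex v)
    {ζ η : Finset (Fin (n + 1)) → Euc n}
    (h : ∀ S : Finset (Fin (n + 1)), 1 ≤ S.card → S.card ≤ n →
      2 ≤ ((n : ℝ) / (n + 1 - S.card)) * ⟪base (wtBody n) v S + ζ S, vsum v S⟫ +
        (1 / (S.card : ℝ)) * ⟪base (wtPolar n) v S + η S, vsum v S⟫) :
    0 ≤ ∑ π : Equiv.Perm (Fin (n + 1)), ∑ k : Fin n,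
        wtBody n (k + 1) * wall v π k (ζ (flag π k)) +
      ∑ π : Equiv.Perm (Fin (n + 1)), ∑ k : Fin n,
        wtPolar n (k + 1) * wall v π k (η (flag π k)) := by
  rw [sum_trace hn hv, sum_trace hn hv, ← Finset.sum_add_distrib]
  refine Finset.sum_nonneg fun π _ => ?_
  rw [← Finset.sum_add_distrib]
  refine Finset.sum_nonneg fun k _ => ?_
  have hk : (k : ℝ) + 1 ≤ n := by exact_mod_cast k.2
  have hk0 : (0 : ℝ) ≤ k := Nat.cast_nonneg _
  have h1 := h (flag π k) (by rw [card_flag]; omega) (by rw [card_flag]; have := k.2; omega)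
  rw [base_wtBody _ (by rw [card_flag]; omega) (by rw [card_flag]; have := k.2; omega),
    base_wtPolar, inner_add_left, inner_add_left, inner_smul_left, inner_smul_left,
    inner_vsum_self hn hv, card_flag] at h1
  simp only [conj_trivial] at h1
  push_cast at h1
  have hn' : (0 : ℝ) < n := by linarith
  have hd : (0 : ℝ) < n - k := by linarith
  have hd' : (n : ℝ) + 1 - (k + 1) = n - k := by ring
  rw [hd'] at h1
  have e1 : wtBody n (k + 1) * ((n + 1) / ((k + 1) * (n - k))) = (n : ℝ) / (n - k) := by
    rw [wtBody]; push_cast; field_simp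
  have e2 : wtPolar n (k + 1) * ((n + 1) / ((k + 1) * (n - k))) = 1 / ((k : ℝ) + 1) := by
    rw [wtPolar]; push_cast; rw [hd']; field_simp
  rw [e1, e2]
  have e3 : (n : ℝ) / (n - k) * (1 / (k + 1) * ((k + 1) * ((n - k) / n))) = 1 := by field_simp
  have e4 : 1 / ((k : ℝ) + 1) * (n / (n - k) * ((k + 1) * ((n - k) / n))) = 1 := by field_simp
  rw [mul_add, mul_add, e3, e4] at h1
  linarith

/-- The tangency points of all faces, written as perturbations of the base points. -/
lemma exists_perturb (hn : 0 < n) (hv : IsRegularSimplex v) (hK : Squeezed v δ K) :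
    ∃ ζ η : Finset (Fin (n + 1)) → Euc n,
      (∀ S, ‖ζ S‖ ≤ (2 * n ^ 2) * δ) ∧ (∀ S, ‖η S‖ ≤ (2 * n ^ 2) * δ) ∧
      ∀ S : Finset (Fin (n + 1)), 1 ≤ S.card → S.card ≤ n →
        base (wtBody n) v S + ζ S ∈ K ∧ base (wtPolar n) v S + η S ∈ polarAt K 0 ∧
        2 ≤ ((n : ℝ) / (n + 1 - S.card)) * ⟪base (wtBody n) v S + ζ S, vsum v S⟫ +
          (1 / (S.card : ℝ)) * ⟪base (wtPolar n) v S + η S, vsum v S⟫ ∧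
        (base (wtBody n) v S ∈ K → ζ S = 0 ∧ η S = 0) := by
  have hδ := hK.pos
  have key : ∀ S : Finset (Fin (n + 1)), ∃ z w : Euc n,
      ‖z‖ ≤ (2 * n ^ 2) * δ ∧ ‖w‖ ≤ (2 * n ^ 2) * δ ∧ (1 ≤ S.card → S.card ≤ n →
        base (wtBody n) v S + z ∈ K ∧ base (wtPolar n) v S + w ∈ polarAt K 0 ∧
        2 ≤ ((n : ℝ) / (n + 1 - S.card)) * ⟪base (wtBody n) v S + z, vsum v S⟫ +
          (1 / (S.card : ℝ)) * ⟪base (wtPolar n) v S + w, vsum v S⟫ ∧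
        (base (wtBody n) v S ∈ K → z = 0 ∧ w = 0)) := by
    intro S
    by_cases h : 1 ≤ S.card ∧ S.card ≤ n
    · obtain ⟨x, hx, y, hy, h1, h2, h3, h4⟩ := tangency hn hv hK S h.1 h.2
      rw [← base_wtBody S h.1 h.2] at h1 h4
      rw [← base_wtPolar S] at h2 h4
      refine ⟨x - base (wtBody n) v S, y - base (wtPolar n) v S, h1, h2, fun _ _ => ?_⟩
      rw [add_sub_cancel, add_sub_cancel]
      exact ⟨hx, hy, h3, fun hb => by
        obtain ⟨rfl, rfl⟩ := h4 hb
        simp⟩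
    · refine ⟨0, 0, by rw [norm_zero]; positivity, by rw [norm_zero]; positivity, ?_⟩
      exact fun h1 h2 => absurd ⟨h1, h2⟩ h
  choose ζ η h1 h2 h3 using key
  exact ⟨ζ, η, h1, h2, h3⟩

/-! ### The extra point and the gain -/

lemma sum_update_sub {m : ℕ} (p : Fin m → Euc n) (k : Fin m) (z : Euc n) :
    ∑ l, Function.update p k z l = ∑ l, p l + (z - p k) := by
  rw [Finset.sum_update_of_mem (Finset.mem_univ k),
    ← Finset.add_sum_erase Finset.univ p (Finset.mem_univ k), Finset.sdiff_singleton_eq_erase]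
  abel

lemma average_mem {Q : Set (Euc n)} (hQ : Convex ℝ Q) {m : ℕ} (hm : 0 < m) {p : Fin m → Euc n}
    (hp : ∀ k, p k ∈ Q) : (1 / (m : ℝ)) • ∑ k, p k ∈ Q := by
  have hm0 : (m : ℝ) ≠ 0 := by positivity
  rw [Finset.smul_sum]
  refine hQ.sum_mem (fun _ _ => by positivity) ?_ fun k _ => hp k
  simp [hm0]

/-- In the average of points of a convex set, one point may be replaced. -/
lemma average_replace {Q : Set (Euc n)} (hQ : Convex ℝ Q) {m : ℕ} (hm : 0 < m)
    {p : Fin m → Euc n} (hp : ∀ k, p k ∈ Q) (k : Fin m) {z : Euc n} (hz : z ∈ Q) :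
    (1 / (m : ℝ)) • ∑ l, p l + (1 / (m : ℝ)) • (z - p k) ∈ Q := by
  rw [← smul_add, ← sum_update_sub]
  refine average_mem hQ hm fun l => ?_
  rcases eq_or_ne l k with rfl | h
  · simpa using hz
  · simpa [h] using hp l

/-- In the average of points of a convex set, two points may be replaced. -/
lemma average_replace₂ {Q : Set (Euc n)} (hQ : Convex ℝ Q) {m : ℕ} (hm : 0 < m)
    {p : Fin m → Euc n} (hp : ∀ k, p k ∈ Q) {k l : Fin m} (hkl : k ≠ l) {z : Euc n}
    (hz : z ∈ Q) :
    (1 / (m : ℝ)) • ∑ l, p l + (1 / (m : ℝ)) • ((2 : ℝ) • z - (p k + p l)) ∈ Q := by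
  have h := average_replace hQ hm (p := Function.update p k z) (fun t => ?_) l hz
  · rw [sum_update_sub, Function.update_of_ne hkl.symm] at h
    convert h using 1
    rw [← smul_add, ← smul_add, two_smul]
    congr 1
    abel
  · rcases eq_or_ne t k with rfl | h
    · simpa using hz
    · simpa [h] using hp t

lemma polar_convex : Convex ℝ (polarAt K 0) := by
  intro x hx y hy s t hs ht hst
  rw [mem_polar_iff] at hx hy ⊢
  intro z hz
  rw [inner_add_left, inner_smul_left, inner_smul_left]
  simp only [conj_trivial]
  nlinarith [mul_le_mul_of_nonneg_left (hx z hz) hs, mul_le_mul_of_nonneg_left (hy z hz) ht]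

lemma zero_mem_polar : (0 : Euc n) ∈ polarAt K 0 := by
  rw [mem_polar_iff]; simp

/-- One flag of tangency points admits an extra point, of `K` or of its polar, which is at
height proportional to `δ` above the hyperplane spanned by the flag. -/
lemma exists_gain (hn : 0 < n) (hv : IsRegularSimplex v) (hK : Squeezed v δ K)
    (hδs : δ ≤ 1 / (192 * (n : ℝ) ^ 4)) (hc : ∀ j, -((1 / (n : ℝ)) • v j) ∈ K)
    (hleast : ¬ ((1 - δ / 2) • simplexHull v ⊆ K))
    {ζ η : Finset (Fin (n + 1)) → Euc n} (hζ : ∀ S, ‖ζ S‖ ≤ (2 * n ^ 2) * δ)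
    (h : ∀ S : Finset (Fin (n + 1)), 1 ≤ S.card → S.card ≤ n →
      base (wtBody n) v S + ζ S ∈ K ∧ base (wtPolar n) v S + η S ∈ polarAt K 0 ∧
      (base (wtBody n) v S ∈ K → ζ S = 0 ∧ η S = 0)) :
    ∃ (π : Equiv.Perm (Fin (n + 1))) (q r : Euc n),
      ‖q‖ ≤ 3 * n ^ 2 * δ ∧ ‖r‖ ≤ 3 * n ^ 2 * δ ∧
      (1 / (n : ℝ)) • ∑ k : Fin n, (base (wtBody n) v (flag π k) + ζ (flag π k)) + q ∈ K ∧
      (1 / (n : ℝ)) • ∑ k : Fin n, (base (wtPolar n) v (flag π k) + η (flag π k)) + r ∈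
        polarAt K 0 ∧
      δ / (64 * n ^ 2) ≤ level (wtBody n) v π q + level (wtPolar n) v π r := by
  have hn' : (1 : ℝ) ≤ n := by exact_mod_cast hn
  have hn0 : (0 : ℝ) < n := by linarith
  have hδ := hK.pos
  obtain ⟨i, hdeep⟩ := deep_vertex hn hv hK hleast hc
  have hbi : base (wtBody n) v {i} = v i := by
    rw [base_wtBody _ (by simp) (by simp; omega)]; simp [vsum]
  obtain ⟨x, hx⟩ : ∃ x, x = base (wtBody n) v {i} + ζ {i} := ⟨_, rfl⟩
  have hxK : x ∈ K := hx ▸ (h {i} (by simp) (by simp; omega)).1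
  have hxi : ‖x - v i‖ ≤ 2 * n ^ 2 * δ := by
    rw [hx, hbi, add_sub_cancel_left]; exact hζ _
  obtain ⟨j, hji, hj⟩ := dichotomy hn hv hK hδs hc hxK hxi (hdeep x hxK)
  have hn2 : 2 ≤ n := by
    by_contra hlt
    have h1 : n = 1 := by omega
    have h2 := hdeep _ (hc j)
    rw [map_neg, map_smul, ell_ne hv hji.symm, h1] at h2
    norm_num at h2
    linarith
  -- the facet opposite to `v j` carries its unperturbed centroids
  have hbj : base (wtBody n) v {j}ᶜ = -((1 / (n : ℝ)) • v j) := by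
    rw [base_wtBody _ (by rw [card_compl_single]; omega) (by rw [card_compl_single]),
      card_compl_single, vsum_compl hn hv, smul_neg]
  have hbj' : base (wtPolar n) v {j}ᶜ = -((n : ℝ) • v j) := by
    rw [base_wtPolar, card_compl_single, vsum_compl hn hv, smul_neg]
    congr 2
    rw [add_sub_cancel_left, div_one]
  obtain ⟨hζj, hηj⟩ := (h {j}ᶜ (by rw [card_compl_single]; omega)
    (by rw [card_compl_single])).2.2 (by rw [hbj]; exact hc j)
  obtain ⟨π, hπ0, hπl⟩ : ∃ π : Equiv.Perm (Fin (n + 1)), π 0 = i ∧ π (Fin.last n) = j := by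
    have h0 : (0 : Fin (n + 1)) ≠ Fin.last n := by
      rw [Ne, Fin.ext_iff]; simp; omega
    let σ := Equiv.swap (0 : Fin (n + 1)) i
    refine ⟨σ.trans (Equiv.swap (σ (Fin.last n)) j), ?_, ?_⟩
    · have e : σ 0 = i := Equiv.swap_apply_left _ _
      rw [Equiv.trans_apply, e, Equiv.swap_apply_of_ne_of_ne ?_ hji.symm]
      rw [← e]
      exact fun hh => h0 (σ.injective hh)
    · rw [Equiv.trans_apply, Equiv.swap_apply_left]
  obtain ⟨k₀, k₁, hk01, hk₀, hk₁⟩ : ∃ k₀ k₁ : Fin n, k₀ ≠ k₁ ∧ flag π k₀ = {i} ∧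
      flag π k₁ = {j}ᶜ := by
    obtain ⟨m, rfl⟩ : ∃ m, n = m + 1 := ⟨n - 1, by omega⟩
    refine ⟨0, Fin.last m, ?_, by rw [flag_zero, hπ0], by rw [flag_last, hπl]⟩
    rw [Ne, Fin.ext_iff]; simp; omega
  have hpK : ∀ k : Fin n, base (wtBody n) v (flag π k) + ζ (flag π k) ∈ K := fun k =>
    (h _ (by rw [card_flag]; omega) (by rw [card_flag]; have := k.2; omega)).1
  have hpP : ∀ k : Fin n, base (wtPolar n) v (flag π k) + η (flag π k) ∈ polarAt K 0 := fun k =>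
    (h _ (by rw [card_flag]; omega) (by rw [card_flag]; have := k.2; omega)).2.1
  rcases hj with hm | ⟨y, hyP, hyn, hyi⟩
  · obtain ⟨m, hmdef⟩ : ∃ m, m = (1 / 2 : ℝ) • (x + -((1 / (n : ℝ)) • v j)) := ⟨_, rfl⟩
    rw [← hmdef] at hm
    have h4 : δ * (192 * (n : ℝ) ^ 4) ≤ 1 := by
      rwa [le_div_iff₀ (by positivity)] at hδs
    have hn2δ : (n : ℝ) ^ 3 * δ ≤ 1 / 192 := by
      have : (n : ℝ) ^ 3 * 1 ≤ (n : ℝ) ^ 3 * n := by gcongr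
      nlinarith
    refine ⟨π, (2 * (δ / (64 * n)) / n) • m, 0, ?_, by rw [norm_zero]; positivity, ?_, ?_, ?_⟩
    · have hv1 := hv.1
      have h1 : ‖x‖ ≤ 1 + 2 * n ^ 2 * δ := by
        calc ‖x‖ = ‖v i + (x - v i)‖ := by rw [add_sub_cancel]
          _ ≤ ‖v i‖ + ‖x - v i‖ := norm_add_le _ _
          _ ≤ _ := by rw [hv1]; linarith
      have h2 : ‖m‖ ≤ 2 := by
        rw [hmdef, norm_smul]
        have h3 : ‖x + -((1 / (n : ℝ)) • v j)‖ ≤ ‖x‖ + 1 / n := by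
          refine (norm_add_le _ _).trans ?_
          rw [norm_neg, norm_smul, hv1, Real.norm_of_nonneg (by positivity), mul_one]
        have h5 : 1 / (n : ℝ) ≤ 1 := by rw [div_le_one hn0]; exact hn'
        have h6 : (n : ℝ) ^ 2 * δ ≤ 1 / 192 := by
          have : (n : ℝ) ^ 2 * 1 ≤ (n : ℝ) ^ 2 * n := by gcongr
          nlinarith
        rw [Real.norm_of_nonneg (by norm_num)]
        linarith
      rw [norm_smul, Real.norm_of_nonneg (by positivity)]
      have e : 2 * (δ / (64 * n)) / n ≤ δ := by
        rw [div_le_iff₀ hn0, ← mul_div_assoc, div_le_iff₀ (by positivity)]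
        nlinarith [mul_pos hδ hn0, mul_le_mul_of_nonneg_left hn' (mul_pos hδ hn0).le]
      calc _ ≤ δ * 2 := by gcongr
        _ ≤ 3 * n ^ 2 * δ := by nlinarith [mul_le_mul_of_nonneg_left (one_le_pow₀ hn' (n := 2)) hδ.le]
    · have := average_replace₂ hK.conv hn hpK hk01 hm
      convert this using 2
      rw [hk₀, hk₁, hbj, hζj, add_zero, ← hx]
      have e : x + -((1 / (n : ℝ)) • v j) = (2 : ℝ) • m := by
        rw [hmdef, smul_smul]; norm_num
      rw [e, ← smul_sub, add_smul, one_smul, add_sub_cancel_left, smul_smul, smul_smul]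
      congr 1
      ring
    · rw [add_zero]
      exact average_mem polar_convex hn hpP
    · rw [map_zero, add_zero, level_wtBody hn hv, hπl, map_smul, hmdef, map_smul, map_add, map_neg,
        map_smul, ell_self hv]
      have h1 : ell v j x ≤ -(1 / (n : ℝ)) + 2 * n ^ 2 * δ := by
        have h2 := (abs_le.mp (abs_ell_le hv j (x - v i))).2
        rw [map_sub, ell_ne hv hji] at h2
        linarith
      have h2 : 2 * n ^ 2 * δ ≤ 1 / n := by
        rw [le_div_iff₀ hn0]; nlinarith
      simp only [smul_eq_mul]
      have e : -(n * (2 * (δ / (64 * n)) / n * (1 / 2 * (ell v j x + -(1 / (n : ℝ) * 1))))) =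
          δ / (64 * n) * (1 / n - ell v j x) := by field_simp; ring
      rw [e]
      calc δ / (64 * (n : ℝ) ^ 2) = δ / (64 * n) * (1 / n) := by field_simp
        _ ≤ _ := by gcongr; linarith
  · refine ⟨π, 0, (1 / (n : ℝ)) • (y - -((n : ℝ) • v j)), by rw [norm_zero]; positivity,
      ?_, ?_, ?_, ?_⟩
    · rw [norm_smul, Real.norm_of_nonneg (by positivity)]
      have h5 : 1 / (n : ℝ) ≤ 1 := by rw [div_le_one hn0]; exact hn'
      calc _ ≤ 1 * ‖y - -((n : ℝ) • v j)‖ := by gcongr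
        _ ≤ _ := by rw [one_mul]; exact hyn
    · rw [add_zero]
      exact average_mem hK.conv hn hpK
    · have := average_replace polar_convex hn hpP k₁ hyP
      rwa [hk₁, hbj', hηj, add_zero] at this
    · rw [map_zero, zero_add, level_wtPolar hn hv, hπ0, map_smul, map_sub, map_neg, map_smul,
        ell_ne hv hji.symm]
      simp only [smul_eq_mul]
      have e : 1 / (n : ℝ) * (ell v i y - -(n * -(1 / (n : ℝ)))) = 1 / n * (ell v i y - 1) := by
        field_simp
      rw [e]
      calc δ / (64 * (n : ℝ) ^ 2) ≤ δ / (16 * (n : ℝ) ^ 2) := by gcongr; norm_num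
        _ = 1 / n * (δ / (16 * n)) := by field_simp
        _ ≤ _ := by gcongr; linarith

/-! ### Finiteness and positivity of the volumes -/

lemma Squeezed.volume_polar_ne_top (hn : 0 < n) (hv : IsRegularSimplex v) (hK : Squeezed v δ K) :
    volume (polarAt K 0) ≠ ⊤ := by
  have hδ := hK.pos
  have hδ2 := hK.le_half
  refine ne_top_of_le_ne_top ?_ (measure_mono (t := closedBall (0 : Euc n) (n * (2 * n))) ?_)
  · exact measure_closedBall_lt_top.ne
  · intro y hy
    rw [mem_closedBall_zero_iff]
    refine norm_le_of_ell hn hv fun i => ?_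
    have hn' : (1 : ℝ) ≤ n := by exact_mod_cast hn
    have h1 : ∀ i, ell v i y ≤ 2 := fun i => (hK.polar_ell_le hy i).trans (by linarith)
    have h2 := sum_compl_ell hn hv y {i}
    rw [Finset.sum_singleton] at h2
    have h3 : ∑ l ∈ ({i}ᶜ : Finset (Fin (n + 1))), ell v l y ≤ n * 2 := by
      refine (Finset.sum_le_sum fun l _ => h1 l).trans ?_
      rw [Finset.sum_const, card_compl_single, nsmul_eq_mul]
    rw [abs_le]
    constructor <;> linarith [h1 i]

lemma simplex_volume_ne_top : volume (simplexHull v) ≠ ⊤ :=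
  ((Set.finite_range v).isCompact_convexHull ℝ).measure_lt_top.ne

lemma simplex_volume_pos (hn : 0 < n) (hv : IsRegularSimplex v) : 0 < volume (simplexHull v) := by
  have hn' : (0 : ℝ) < n := by exact_mod_cast hn
  refine (measure_ball_pos volume (0 : Euc n) (r := 1 / n) (by positivity)).trans_le
    (measure_mono fun x hx => ?_)
  rw [mem_ball_zero_iff] at hx
  rw [mem_simplexHull hn hv]
  intro i
  have := (abs_le.mp (abs_ell_le hv i x)).1
  linarith

lemma polar_simplex_volume_pos (hv : IsRegularSimplex v) :
    0 < volume (polarAt (simplexHull v) 0) := by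
  refine (measure_ball_pos volume (0 : Euc n) one_pos).trans_le (measure_mono fun x hx => ?_)
  rw [mem_ball_zero_iff] at hx
  rw [mem_polar_simplex]
  intro i
  have := (abs_le.mp (abs_ell_le hv i x)).2
  linarith

lemma polar_simplex_volume_ne_top (hn : 0 < n) (hv : IsRegularSimplex v) :
    volume (polarAt (simplexHull v) 0) ≠ ⊤ := by
  have h : Squeezed v (1 / 2) (simplexHull v) :=
    { pos := by norm_num
      le_half := le_rfl
      compact := (Set.finite_range v).isCompact_convexHull ℝ
      conv := convex_convexHull _ _
      sub := subset_rfl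
      vert := fun i => by
        have h0 : (0 : Euc n) ∈ simplexHull v := by
          rw [mem_simplexHull hn hv]
          intro i
          rw [map_zero]
          have : (0 : ℝ) ≤ 1 / n := by positivity
          linarith
        have := (convex_convexHull ℝ (Set.range v)).smul_mem_of_zero_mem h0 (vertex_mem i)
          (t := 1 - 1 / 2) (by norm_num)
        exact this }
  exact h.volume_polar_ne_top hn hv

/-- The product of two relative volume gains `1 + A` and `1 + B` of order `δ`. -/
lemma product_gain {V W X Y A B c D δ : ℝ} (hV : 0 < V) (hW : 0 < W) (hδ : 0 < δ)
    (hX : V * (1 + A) ≤ X) (hY : W * (1 + B) ≤ Y) (hA : |A| ≤ D * δ) (hB : |B| ≤ D * δ)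
    (hAB : c / 2 * δ ≤ A + B) (h1 : D * δ ≤ 1) (h2 : D ^ 2 * δ ≤ c / 4) :
    V * W + V * W * (c / 4) * δ ≤ X * Y := by
  have hA' := abs_le.mp hA
  have hB' := abs_le.mp hB
  have h3 : V * (1 + A) * (W * (1 + B)) ≤ X * Y := by
    have hA1 : 0 ≤ 1 + A := by linarith
    have hB1 : 0 ≤ 1 + B := by linarith
    exact mul_le_mul hX hY (by positivity) ((by positivity : 0 ≤ V * (1 + A)).trans hX)
  have h4 : -(D ^ 2 * δ * δ) ≤ A * B := by
    have := mul_le_mul hA hB (abs_nonneg _) ((abs_nonneg _).trans hA)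
    rw [← abs_mul] at this
    have := neg_abs_le (A * B)
    nlinarith
  have h5 : D ^ 2 * δ * δ ≤ c / 4 * δ := by gcongr
  have h6 : 1 + c / 4 * δ ≤ (1 + A) * (1 + B) := by nlinarith
  have h7 := mul_le_mul_of_nonneg_left h6 (mul_pos hV hW).le
  nlinarith

/-- The relative volume change supplied by `volume_lower` is of order `δ`. -/
lemma abs_change_le (hv : IsRegularSimplex v) {a : ℕ → ℝ} {L M ε : ℝ} (hε : 0 ≤ ε)
    (hδ : 0 < δ) (hL : ∑ k : Fin n, |a (k + 1)| ≤ L) {ζ : Finset (Fin (n + 1)) → Euc n}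
    (hζ : ∀ S, ‖ζ S‖ ≤ M * δ) (π₀ : Equiv.Perm (Fin (n + 1))) {q : Euc n} (hq : ‖q‖ ≤ M * δ) :
    |((n + 1).factorial : ℝ)⁻¹ *
        (∑ π : Equiv.Perm (Fin (n + 1)), ∑ k : Fin n, a (k + 1) * wall v π k (ζ (flag π k)) +
          (2⁻¹ : ℝ) ^ (n + 1) * level a v π₀ q) - ε * δ| ≤ (4 * L * M + ε) * δ := by
  have hL0 : 0 ≤ L := (Finset.sum_nonneg fun _ _ => abs_nonneg _).trans hL
  obtain ⟨F, hF⟩ : ∃ F : ℝ, F = ((n + 1).factorial : ℝ) := ⟨_, rfl⟩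
  have hF1 : 1 ≤ F := by rw [hF]; exact_mod_cast Nat.succ_le_of_lt (Nat.factorial_pos _)
  have h1 : |∑ π : Equiv.Perm (Fin (n + 1)), ∑ k : Fin n,
      a (k + 1) * wall v π k (ζ (flag π k))| ≤ F * (2 * L * (M * δ)) := by
    calc _ ≤ ∑ π : Equiv.Perm (Fin (n + 1)), 2 * L * (M * δ) :=
          (Finset.abs_sum_le_sum_abs _ _).trans
            (Finset.sum_le_sum fun π _ => abs_trace_le hv hL hζ π)
      _ = _ := by rw [Finset.sum_const, nsmul_eq_mul, Finset.card_univ, Fintype.card_perm,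
          Fintype.card_fin, hF]
  have h2 : |(2⁻¹ : ℝ) ^ (n + 1) * level a v π₀ q| ≤ F * (2 * L * (M * δ)) := by
    rw [abs_mul, abs_of_pos (by positivity)]
    calc (2⁻¹ : ℝ) ^ (n + 1) * |level a v π₀ q| ≤ 1 * (2 * L * ‖q‖) :=
          mul_le_mul (pow_le_one₀ (by norm_num) (by norm_num)) (abs_level_le hv hL π₀ q)
            (abs_nonneg _) zero_le_one
      _ ≤ F * (2 * L * (M * δ)) := by gcongr
  rw [← hF]
  calc _ ≤ |F⁻¹ * (∑ π : Equiv.Perm (Fin (n + 1)), ∑ k : Fin n,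
            a (k + 1) * wall v π k (ζ (flag π k)) + (2⁻¹ : ℝ) ^ (n + 1) * level a v π₀ q)| +
          |ε * δ| := abs_sub _ _
    _ ≤ F⁻¹ * (F * (2 * L * (M * δ)) + F * (2 * L * (M * δ))) + ε * δ := by
        rw [abs_mul, abs_of_pos (by positivity : 0 < F⁻¹), abs_of_nonneg (by positivity : 0 ≤ ε * δ)]
        gcongr
        exact (abs_add_le _ _).trans (add_le_add h1 h2)
    _ = _ := by field_simp; ring

end assembly

/-- Linear stability of the volume product at the simplex for bodies with the
centroids of facets inside: if `δ = min {d > 0 : (1−d)Δₙ ⊆ K ⊆ Δₙ}` is small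
enough and all centroids of facets of `Δₙ` belong to `K`, then
`vol(K)·vol(K°) ≥ vol(Δₙ)·vol(Δₙ°) + Cδ`. -/
theorem volume_product_gain (n : ℕ) (hn : 0 < n) (v : Fin (n + 1) → Euc n)
    (hv : IsRegularSimplex v) :
    ∃ δ₀ > 0, ∃ C > 0, ∀ (δ : ℝ) (K : Set (Euc n)),
      0 < δ → δ < δ₀ → IsConvexBody K →
      IsLeast {d : ℝ | 0 < d ∧ (1 - d) • simplexHull v ⊆ K ∧ K ⊆ simplexHull v} δ →
      (∀ s : Finset (Fin (n + 1)), s.card = n → centroidOf v s ∈ K) →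
      (volume K).toReal * (volume (polarAt K 0)).toReal ≥
        (volume (simplexHull v)).toReal *
          (volume (polarAt (simplexHull v) 0)).toReal + C * δ := by
  have hn0 : (0 : ℝ) < n := by exact_mod_cast hn
  obtain ⟨F, hF⟩ : ∃ F : ℝ, F = ((n + 1).factorial : ℝ) := ⟨_, rfl⟩
  have hFpos : 0 < F := by rw [hF]; exact_mod_cast Nat.factorial_pos _
  obtain ⟨M, hMdef⟩ : ∃ M : ℝ, M = 3 * (n : ℝ) ^ 2 := ⟨_, rfl⟩
  have hM : 0 < M := by rw [hMdef]; positivity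
  have hM2 : 2 * (n : ℝ) ^ 2 ≤ M := by rw [hMdef]; nlinarith [sq_nonneg (n : ℝ)]
  obtain ⟨h, hh⟩ : ∃ h : ℝ, h = (2⁻¹ : ℝ) ^ (n + 1) := ⟨_, rfl⟩
  have hhpos : 0 < h := by rw [hh]; positivity
  -- the combined relative gain is at least `c * δ` before the error terms `ε * δ`
  obtain ⟨c, hc⟩ : ∃ c : ℝ, c = F⁻¹ * (h * (1 / (64 * (n : ℝ) ^ 2))) := ⟨_, rfl⟩
  have hcpos : 0 < c := by rw [hc]; positivity
  obtain ⟨L, hLK, hLP⟩ : ∃ L : ℝ, ∑ k : Fin n, |wtBody n (k + 1)| ≤ L ∧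
      ∑ k : Fin n, |wtPolar n (k + 1)| ≤ L := ⟨_, le_max_left _ _, le_max_right _ _⟩
  have hL0 : 0 ≤ L := (Finset.sum_nonneg fun _ _ => abs_nonneg _).trans hLK
  obtain ⟨D, hD⟩ : ∃ D : ℝ, D = 4 * L * M + c / 4 := ⟨_, rfl⟩
  have hDpos : 0 < D := by rw [hD]; positivity
  obtain ⟨δ₁, hδ₁, hlowK⟩ := volume_lower hn hv wtBody_pos hM.le (by positivity : 0 < c / 4)
  obtain ⟨δ₂, hδ₂, hlowP⟩ := volume_lower hn hv wtPolar_pos hM.le (by positivity : 0 < c / 4)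
  have hV := ENNReal.toReal_pos (simplex_volume_pos hn hv).ne' simplex_volume_ne_top
  have hW := ENNReal.toReal_pos (polar_simplex_volume_pos hv).ne'
    (polar_simplex_volume_ne_top hn hv)
  refine ⟨min (min δ₁ δ₂) (min (min (1 / 2) (1 / (192 * (n : ℝ) ^ 4))) (min (1 / D)
    (c / 4 / D ^ 2))), by positivity, (volume (simplexHull v)).toReal *
    (volume (polarAt (simplexHull v) 0)).toReal * (c / 4), by positivity, ?_⟩
  intro δ K hδ hδlt hbody hleast hcent
  simp only [lt_min_iff] at hδlt
  obtain ⟨⟨hlt1, hlt2⟩, ⟨hlt3, hlt4⟩, hlt5, hlt6⟩ := hδlt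
  obtain ⟨⟨-, hsub1, hsub2⟩, hmin⟩ := hleast
  have hK : Squeezed v δ K :=
    { pos := hδ
      le_half := hlt3.le
      compact := hbody.1
      conv := hbody.2.1
      sub := hsub2
      vert := fun i => hsub1 (Set.smul_mem_smul_set (vertex_mem i)) }
  have hcK : ∀ j, -((1 / (n : ℝ)) • v j) ∈ K := fun j => by
    rw [← centroid_facet hn hv j]
    exact hcent _ (card_compl_single j)
  have hnot : ¬ ((1 - δ / 2) • simplexHull v ⊆ K) := fun hs => by
    have : δ ≤ δ / 2 := hmin ⟨by linarith, hs, hsub2⟩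
    linarith
  obtain ⟨ζ, η, hζ, hη, hζη⟩ := exists_perturb hn hv hK
  obtain ⟨π₀, q, r, hq, hr, hqK, hrP, hgain⟩ := exists_gain hn hv hK hlt4.le hcK hnot hζ
    fun S h1 h2 => ⟨(hζη S h1 h2).1, (hζη S h1 h2).2.1, (hζη S h1 h2).2.2.2⟩
  have htr := trace_nonneg hn hv fun S h1 h2 => (hζη S h1 h2).2.2.1
  rw [← hMdef] at hq hr
  have hζ' : ∀ S, ‖ζ S‖ ≤ M * δ := fun S => (hζ S).trans (by gcongr)
  have hη' : ∀ S, ‖η S‖ ≤ M * δ := fun S => (hη S).trans (by gcongr)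
  have hX := hlowK δ hδ hlt1 (simplexHull v) K ζ π₀ q
    (fun π x _ hx => by
      rw [level_wtBody hn hv]
      have h1 := (mem_simplexHull hn hv x).mp hx (π (Fin.last n))
      have h2 := mul_le_mul_of_nonneg_left h1 hn0.le
      have h3 : (n : ℝ) * -(1 / n) = -1 := by field_simp
      linarith)
    hK.conv (hK.zero_mem hn hv) hbody.1.measure_lt_top.ne hζ'
    (fun S h1 h2 => (hζη S h1 h2).1) hq hqK
  have hY := hlowP δ hδ hlt2 (polarAt (simplexHull v) 0) (polarAt K 0) η π₀ r
    (fun π x _ hx => by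
      rw [level_wtPolar hn hv]
      exact (mem_polar_simplex x).mp hx _)
    polar_convex zero_mem_polar (hK.volume_polar_ne_top hn hv) hη'
    (fun S h1 h2 => (hζη S h1 h2).2.1) hr hrP
  have hA := abs_change_le hv (by positivity : 0 ≤ c / 4) hδ hLK hζ' π₀ hq
  have hB := abs_change_le hv (by positivity : 0 ≤ c / 4) hδ hLP hη' π₀ hr
  rw [← hF, ← hh] at hX hY hA hB
  rw [← hD] at hA hB
  rw [add_sub_assoc] at hX hY
  refine product_gain hV hW hδ hX hY hA hB ?_ ?_ ?_
  · have h1 := mul_le_mul_of_nonneg_left hgain hhpos.le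
    have h2 := mul_le_mul_of_nonneg_left (add_le_add htr h1) (inv_pos.mpr hFpos).le
    have h3 : F⁻¹ * (0 + h * (δ / (64 * (n : ℝ) ^ 2))) = c * δ := by rw [hc]; ring
    rw [h3] at h2
    linarith
  · rw [lt_div_iff₀ hDpos] at hlt5
    linarith
  · rw [lt_div_iff₀ (by positivity)] at hlt6
    linarith
end
end

section
/- Let K be a convex body with (1 − δ)Δ_n ⊂ K ⊂ Δ_n for some small δ > 0, and suppose v₀ is a vertex of Δ_n with (1 − δ)v₀ ∈ ∂K. Then the support function of K satisfies h_K(v₀) ≤ 1 − δ/n. Consequently, if s > 0 is such that s·v₀ ∈ ∂K°, then 1/(1 − δ/n) ≤ s ≤ 1/(1 − δ). -/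
/-!
The point `(1 - δ)v₀` lies on `∂K`, so a nonzero functional `f` attains its maximum over `K` there.
As `K ⊇ (1 - δ)Δ`, the vertex `v₀` maximizes `f` over `Δ`; since the vertices sum to zero, this
gives `f(vⱼ) ≥ -n f(v₀)` for all `j`, and `f(v₀) > 0` because `f` is not constant on `K ⊆ Δ`.
Hence `f(v₀) - f(x) ≤ n f(v₀) (1 - ⟨x, v₀⟩)` holds at every vertex and so on all of `Δ`
(`functional_le_on_simplex`). For `x ∈ K` the left side is at least `δ f(v₀)`, which is the bound
`⟨x, v₀⟩ ≤ 1 - δ/n`.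

For the polar body, `s v₀ ∈ K°` (a closed set) tested against `(1 - δ)v₀ ∈ K` gives the upper bound
on `s`. If `s (1 - δ/n) < 1`, then `s v₀` satisfies all the constraints defining `K°` with uniform
slack, and `K` is bounded, so `s v₀` is interior to `K°` rather than on its boundary.
-/

open MeasureTheory Metric Set Pointwise RealInnerProductSpace

noncomputable section

lemma IsRegularSimplex.sum_eq_zero {n : ℕ} (hn : 0 < n) {v : Fin (n + 1) → Euc n}
    (hv : IsRegularSimplex v) : ∑ j, v j = 0 := by
  have hn' : (n : ℝ) ≠ 0 := by positivity
  rw [← inner_self_eq_zero (𝕜 := ℝ), sum_inner]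
  refine Finset.sum_eq_zero fun i _ => ?_
  rw [inner_sum, ← Finset.add_sum_erase _ _ (Finset.mem_univ i),
    Finset.sum_congr rfl fun j hj => hv.2 i j (Finset.ne_of_mem_erase hj).symm]
  simp [hv.1 i, hn']

lemma IsRegularSimplex.norm_le_one {n : ℕ} {v : Fin (n + 1) → Euc n}
    (hv : IsRegularSimplex v) {x : Euc n} (hx : x ∈ simplexHull v) : ‖x‖ ≤ 1 := by
  have h : simplexHull v ⊆ closedBall 0 1 := by
    refine convexHull_min ?_ (convex_closedBall _ _)
    rintro _ ⟨j, rfl⟩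
    simp [hv.1 j]
  simpa using h hx

/-- A functional that is maximal over the simplex at the vertex `v i` decreases, when moving away
from `v i`, at most `n * f (v i)` times as fast as `⟪·, v i⟫`. The constant is sharp when `f` equals
`f (v i)` at all vertices but one. -/
lemma functional_le_on_simplex {n : ℕ} (hn : 0 < n) {v : Fin (n + 1) → Euc n}
    (hv : IsRegularSimplex v) (f : Euc n →L[ℝ] ℝ) (i : Fin (n + 1))
    (hmax : ∀ j, f (v j) ≤ f (v i)) {x : Euc n} (hx : x ∈ simplexHull v) :
    f (v i) - f x ≤ n * f (v i) * (1 - ⟪x, v i⟫) := by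
  have hn' : (n : ℝ) ≠ 0 := by positivity
  have hsum : ∑ j, f (v j) = 0 := by rw [← map_sum, hv.sum_eq_zero hn, map_zero]
  have hlow : ∀ j, -(n * f (v i)) ≤ f (v j) := by
    intro j
    have h1 : ∑ k ∈ Finset.univ.erase j, f (v k) ≤ n * f (v i) := by
      refine (Finset.sum_le_card_nsmul _ _ (f (v i)) fun k _ => hmax k).trans ?_
      simp
    have h2 := Finset.add_sum_erase Finset.univ (fun k => f (v k)) (Finset.mem_univ j)
    simp only [hsum] at h2
    linarith
  have hconv : Convex ℝ {y : Euc n | n * f (v i) * ⟪y, v i⟫ - f y ≤ n * f (v i) - f (v i)} := by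
    refine convex_halfSpace_le ⟨fun y z => ?_, fun c y => ?_⟩ _
    · simp only [inner_add_left, map_add]; ring
    · simp only [real_inner_smul_left, map_smul, smul_eq_mul]; ring
  have h : simplexHull v ⊆ {y | n * f (v i) * ⟪y, v i⟫ - f y ≤ n * f (v i) - f (v i)} := by
    refine convexHull_min ?_ hconv
    rintro _ ⟨j, rfl⟩
    simp only [mem_ofPred_eq]
    by_cases hj : j = i
    · subst hj
      simp [hv.1 j]
    · have h1 : (n : ℝ) * f (v i) * -(1 / (n : ℝ)) = -f (v i) := by field_simp
      rw [hv.2 j i hj, h1]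
      linarith [hlow j]
  have := h hx
  simp only [mem_ofPred_eq] at this
  linarith

lemma inner_le_of_touching_vertex {n : ℕ} (hn : 0 < n) {v : Fin (n + 1) → Euc n}
    (hv : IsRegularSimplex v) {δ : ℝ} (hδ1 : δ < 1) {K : Set (Euc n)}
    (hK : IsConvexBody K) (hsub : (1 - δ) • simplexHull v ⊆ K) (hsup : K ⊆ simplexHull v)
    {i : Fin (n + 1)} (hi : (1 - δ) • v i ∈ frontier K) {x : Euc n} (hx : x ∈ K) :
    ⟪x, v i⟫ ≤ 1 - δ / n := by
  have hn' : (0 : ℝ) < n := by positivity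
  obtain ⟨-, hconv, z, hz⟩ := hK
  -- Separating from the open set `interior K` yields a strict inequality at `z`, which is what
  -- rules out `f` being constant on the simplex.
  obtain ⟨f, hf⟩ := geometric_hahn_banach_open_point hconv.interior isOpen_interior hi.2
  have hfK : ∀ y ∈ K, f y ≤ (1 - δ) * f (v i) := by
    intro y hy
    have hcl : closure (interior K) ⊆ {y | f y ≤ f ((1 - δ) • v i)} :=
      closure_minimal (fun y hy => (hf y hy).le) (isClosed_le f.continuous continuous_const)
    have hy' : y ∈ closure (interior K) := by
      rw [hconv.closure_interior_eq_closure_of_nonempty_interior ⟨z, hz⟩]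
      exact subset_closure hy
    simpa using hcl hy'
  have hmax : ∀ j, f (v j) ≤ f (v i) := by
    intro j
    have h := hfK _ (hsub (smul_mem_smul_set (subset_convexHull ℝ _ (mem_range_self j))))
    rw [map_smul, smul_eq_mul] at h
    exact le_of_mul_le_mul_left h (by linarith)
  have hpos : 0 < f (v i) := by
    by_contra! hneg
    have h1 := functional_le_on_simplex hn hv f i hmax (hsup (interior_subset hz))
    have h2 := hf z hz
    rw [map_smul, smul_eq_mul] at h2
    have h3 : 0 ≤ f (v i) := by
      have hs : ∑ j, f (v j) = 0 := by rw [← map_sum, hv.sum_eq_zero hn, map_zero]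
      have h := Finset.sum_le_card_nsmul Finset.univ (fun j => f (v j)) (f (v i)) fun j _ => hmax j
      rw [hs] at h
      simp only [Finset.card_univ, Fintype.card_fin, nsmul_eq_mul] at h
      exact nonneg_of_mul_nonneg_right h (by positivity)
    have h4 : f (v i) = 0 := le_antisymm hneg h3
    rw [h4] at h1 h2
    linarith
  have h1 := functional_le_on_simplex hn hv f i hmax (hsup hx)
  have h2 : f (v i) * δ ≤ f (v i) * (n * (1 - ⟪x, v i⟫)) := by linarith [hfK x hx]
  have h3 : δ / n ≤ 1 - ⟪x, v i⟫ := by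
    rw [div_le_iff₀' hn']
    exact le_of_mul_le_mul_left h2 hpos
  linarith

lemma isClosed_polarAt {n : ℕ} (K : Set (Euc n)) (z : Euc n) : IsClosed (polarAt K z) := by
  have : polarAt K z = ⋂ x ∈ K, {y : Euc n | ⟪y, x - z⟫ ≤ 1} := by
    ext y
    simp [polarAt]
  rw [this]
  exact isClosed_biInter fun x _ => isClosed_le (by fun_prop) continuous_const

/-- A point satisfying the constraints that define the polar of a subset of the unit ball with
uniform slack is an interior point of the polar. -/
lemma mem_interior_polarAt {n : ℕ} {K : Set (Euc n)} (hK : ∀ x ∈ K, ‖x‖ ≤ 1) {y : Euc n} {c : ℝ}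
    (hc : c < 1) (hy : ∀ x ∈ K, ⟪y, x⟫ ≤ c) : y ∈ interior (polarAt K 0) := by
  refine mem_interior.2 ⟨ball y (1 - c), fun w hw x hx => ?_, isOpen_ball,
    mem_ball_self (by linarith)⟩
  rw [mem_ball, dist_eq_norm] at hw
  have h1 : ⟪w - y, x⟫ ≤ ‖w - y‖ :=
    (real_inner_le_norm _ _).trans (mul_le_of_le_one_right (norm_nonneg _) (hK x hx))
  rw [inner_sub_left] at h1
  rw [sub_zero]
  linarith [hy x hx]

/-- If a vertex of the simplex is only reached by `K` at `(1 − δ)v₀ ∈ ∂K`, then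
the support function of `K` at `v₀` satisfies `h_K(v₀) ≤ 1 − δ/n`, and any
`s > 0` with `s·v₀ ∈ ∂K°` satisfies `1/(1 − δ/n) ≤ s ≤ 1/(1 − δ)`. -/
theorem support_at_touching_vertex (n : ℕ) (hn : 0 < n)
    (v : Fin (n + 1) → Euc n) (hv : IsRegularSimplex v) :
    ∃ δ₀ > 0, ∀ δ : ℝ, 0 < δ → δ < δ₀ → ∀ K : Set (Euc n), IsConvexBody K →
      (1 - δ) • simplexHull v ⊆ K → K ⊆ simplexHull v →
      ∀ i : Fin (n + 1), (1 - δ) • v i ∈ frontier K →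
        (∀ x ∈ K, ⟪x, v i⟫ ≤ 1 - δ / n) ∧
        ∀ s : ℝ, 0 < s → s • v i ∈ frontier (polarAt K 0) →
          1 / (1 - δ / n) ≤ s ∧ s ≤ 1 / (1 - δ) := by
  refine ⟨1, one_pos, fun δ hδ hδ1 K hK hsub hsup i hi => ?_⟩
  have hsupport : ∀ x ∈ K, ⟪x, v i⟫ ≤ 1 - δ / n := fun x hx =>
    inner_le_of_touching_vertex hn hv hδ1 hK hsub hsup hi hx
  refine ⟨hsupport, fun s hs hsf => ⟨?_, ?_⟩⟩
  · have hn1 : (1 : ℝ) ≤ n := by exact_mod_cast hn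
    have hδn : δ / n < 1 := (div_le_self hδ.le hn1).trans_lt hδ1
    rw [div_le_iff₀ (by linarith)]
    by_contra! hlt
    refine hsf.2 (mem_interior_polarAt (fun x hx => hv.norm_le_one (hsup hx)) hlt fun x hx => ?_)
    rw [real_inner_smul_left, real_inner_comm]
    exact mul_le_mul_of_nonneg_left (hsupport x hx) hs.le
  · have hmem : s • v i ∈ polarAt K 0 := (isClosed_polarAt K 0).frontier_subset hsf
    have h := hmem _ (hsub (smul_mem_smul_set (subset_convexHull ℝ _ (mem_range_self i))))
    rw [sub_zero, real_inner_smul_left, real_inner_smul_right, real_inner_self_eq_norm_sq,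
      hv.1 i] at h
    rw [le_div_iff₀ (by linarith)]
    linarith
end
end
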